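/- Let A be a parity automaton with costs over Σ_I × Σ_O with n states and k colors, where Ω(Q) contains both an even and an odd color. If Player O wins Γ_f(L(A)) for some delay function f, then she also wins Γ_f(L(A)) for the constant delay function f given by f(0) = 2^{2n⁴k²+2}, with a winning strategy τ_O satisfying Cst_A(τ_O) ≤ n³k²·2^{2n⁷k⁴+3}. -/

import Mathlib

attribute [local instance] Classical.propDecidable

noncomputable section

/-- A parity automaton with costs `(Q, A, qI, δ, Ω, Cst)`.
`Cst q a = true` means that the transition `(q, a, δ q a)` is an increment-transition,
`Cst q a = false` means it is an `ε`-transition. -/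
structure PACost (Q : Type) (A : Type) where
  qI : Q
  δ : Q → A → Q
  Ω : Q → ℕ
  Cst : Q → A → Bool

namespace PACost

variable {Q A : Type}

/-- The state reached after processing the first `n` letters of `w` starting in `q0`. -/
def stateAt (M : PACost Q A) (q0 : Q) (w : ℕ → A) : ℕ → Q
  | 0 => q0
  | n + 1 => M.δ (stateAt M q0 w n) (w n)

/-- The cost (number of increment-transitions) of the run infix between positions `m` and `n`. -/
def segCost (M : PACost Q A) (q0 : Q) (w : ℕ → A) (m n : ℕ) : ℕ :=
  ((Finset.Ico m n).filter fun j => M.Cst (stateAt M q0 w j) (w j) = true).card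

/-- `Ans c`: the set of even colors of `M` that are larger than `c`. -/
def Ans (M : PACost Q A) (c : ℕ) : Set ℕ :=
  { c' | (∃ q, M.Ω q = c') ∧ c < c' ∧ Even c' }

/-- The cost-of-response at position `n` of the run of `M` on `w` starting in `q0`. -/
def Cor (M : PACost Q A) (q0 : Q) (w : ℕ → A) (n : ℕ) : ℕ∞ :=
  if Even (M.Ω (stateAt M q0 w n)) then 0
  else
    sInf { c : ℕ∞ | ∃ n', n < n' ∧
      M.Ω (stateAt M q0 w n') ∈ M.Ans (M.Ω (stateAt M q0 w n)) ∧
      c = (segCost M q0 w n n' : ℕ∞) }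

/-- The run of `M` on `w` starting in `q0` satisfies the parity condition with costs. -/
def Accepting (M : PACost Q A) (q0 : Q) (w : ℕ → A) : Prop :=
  Filter.limsup (fun n => Cor M q0 w n) Filter.atTop < ⊤

/-- The language of `M`. -/
def Lang (M : PACost Q A) : Set (ℕ → A) := { w | Accepting M M.qI w }

/-- `M` is a finitary Büchi automaton: every transition is an increment-transition and
all colors are `1` or `2`. -/
def FinBuchi (M : PACost Q A) : Prop :=
  (∀ q a, M.Cst q a = true) ∧ ∀ q, M.Ω q = 1 ∨ M.Ω q = 2

end PACost

/-- The finite segment `w m, w (m+1), …, w (n-1)` of an infinite word `w`. -/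
def seg {A : Type} (w : ℕ → A) (m n : ℕ) : List A :=
  (List.range (n - m)).map fun i => w (m + i)

section DelayGames

variable {I O : Type}

/-- The `n`-th letter of the concatenation `u 0 ++ u 1 ++ u 2 ++ ⋯`
(well-defined whenever all blocks are non-empty). -/
def flatWord [Inhabited I] (u : ℕ → List I) (n : ℕ) : I :=
  (((List.range (n + 1)).map u).flatten).getD n default

/-- A delay function maps every round to a positive number of letters. -/
def DelayFn (f : ℕ → ℕ) : Prop := ∀ i, 0 < f i

/-- The constant delay function `f_k` with `f_k 0 = k + 1` and `f_k i = 1` for `i > 0`. -/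
def constDF (k : ℕ) : ℕ → ℕ := fun i => if i = 0 then k + 1 else 1

/-- The sequence of letters Player I has produced up to (and including) round `i`. -/
def oHist (u : ℕ → List I) (i : ℕ) : List I := ((List.range (i + 1)).map u).flatten

/-- `τO` is a winning strategy for Player O in the delay game with delay function `f`
and winning condition `L`. -/
def OWinning [Inhabited I] (f : ℕ → ℕ) (L : Set (ℕ → I × O)) (τO : List I → O) : Prop :=
  ∀ u : ℕ → List I, ∀ v : ℕ → O,
    (∀ i, (u i).length = f i) →
    (∀ i, v i = τO (oHist u i)) →
    (fun n => (flatWord u n, v n)) ∈ L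

/-- Player O wins the delay game `Γ_f(L)`. -/
def OWins [Inhabited I] (f : ℕ → ℕ) (L : Set (ℕ → I × O)) : Prop :=
  ∃ τO : List I → O, OWinning f L τO

/-- `τI` is a winning strategy for Player I in the delay game with delay function `f`
and winning condition `L`. -/
def IWinning [Inhabited I] (f : ℕ → ℕ) (L : Set (ℕ → I × O)) (τI : List O → List I) : Prop :=
  (∀ w, (τI w).length = f w.length) ∧
  ∀ u : ℕ → List I, ∀ v : ℕ → O,
    (∀ i, u i = τI ((List.range i).map v)) →
    (fun n => (flatWord u n, v n)) ∉ L

/-- Player I wins the delay game `Γ_f(L)`. -/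
def IWins [Inhabited I] (f : ℕ → ℕ) (L : Set (ℕ → I × O)) : Prop :=
  ∃ τI : List O → List I, IWinning f L τI

/-- The cost of a strategy `τO` of Player O: the supremum of the word-costs `wc` of the
outcomes of plays consistent with `τO`. -/
def stratCost [Inhabited I] (wc : (ℕ → I × O) → ℕ∞) (f : ℕ → ℕ) (τO : List I → O) : ℕ∞ :=
  ⨆ (u : ℕ → List I) (v : ℕ → O)
    (_ : (∀ i, (u i).length = f i) ∧ ∀ i, v i = τO (oHist u i)),
    wc (fun n => (flatWord u n, v n))

/-- An optimal winning strategy for Player O in `Γ_f(L)` exists and has cost `c`. -/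
def OptimalCostIs [Inhabited I] (L : Set (ℕ → I × O)) (wc : (ℕ → I × O) → ℕ∞)
    (f : ℕ → ℕ) (c : ℕ∞) : Prop :=
  (∃ τO, OWinning f L τO ∧ stratCost wc f τO = c) ∧
  ∀ τO, OWinning f L τO → c ≤ stratCost wc f τO

end DelayGames

/-- The cost `limsup_n Cor(ρ(w), n)` of the run of `M` on an infinite word `w`. -/
def PACost.wCost {Q I O : Type} (M : PACost Q (I × O)) : (ℕ → I × O) → ℕ∞ :=
  fun w => Filter.limsup (fun n => PACost.Cor M M.qI w n) Filter.atTop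


/-!
Fix a winning strategy `σ` for some delay function. Abstract a finite word of inputs to its
profile: the summaries (state reached, largest open request, largest answer, whether an increment
occurred) that Player O can achieve on it from each state. Equality of profiles is a right
congruence, so by the pigeonhole principle every sufficiently long block has the profile of
arbitrarily long blocks; replacing the blocks of Player I by such long ones provides the lookahead
that `σ` needs.

It remains to play with finite memory. Track one open request and forget it whenever it has become
overdue, that is, its cost has reached the position at which tracking last restarted. Along a play
won by `σ` the costs are bounded, so this happens only finitely often, and giving the largest, odd
color to such a restart turns the condition into max-parity. As there is then no path of
histories whose largest recurring color is odd, the histories carry well-founded progress measures.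
Following `σ` from a history of minimal measure, among all histories with the same finite
abstraction, makes the largest color on every cycle of the abstraction even.

Finally, if a vertex of the abstraction occurred twice, in blocks with an increment, while a
request stays open, then the cycle between the occurrences would have an odd largest color. Hence
the cost-of-response is at most the number of vertices, plus two for the blocks of the request and
of its answer, times the block length.
-/

section ProgressMeasures

open Relation Filter

variable {T : Type*} {r : T → T → Prop} {col : T → ℕ} {p : ℕ}

/-- `ReachesIn r P n x`: some `r`-path of length `n` leads from `x` to a node with `P`
that has an `r`-successor. -/
def ReachesIn (r : T → T → Prop) (P : T → Prop) : ℕ → T → Prop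
  | 0, x => P x ∧ ∃ y, r x y
  | n + 1, x => ∃ y, r x y ∧ ReachesIn r P n y

theorem exists_reachesIn {P : T → Prop} {x y z : T} (hxy : ReflTransGen r x y) (hy : P y)
    (hyz : r y z) : ∃ n, ReachesIn r P n x := by
  induction hxy using ReflTransGen.head_induction_on with
  | refl => exact ⟨0, hy, z, hyz⟩
  | head hab _ ih => exact ih.imp' (· + 1) fun n hn => ⟨_, hab, hn⟩

theorem exists_path_frequently [Nonempty T] {P : T → Prop}
    (h : ∀ x, ∃ y z, ReflTransGen r x y ∧ P y ∧ r y z) :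
    ∃ t : ℕ → T, (∀ i, r (t i) (t (i + 1))) ∧ ∃ᶠ i in atTop, P (t i) := by
  have reach : ∀ x, ∃ n, ReachesIn r P n x := fun x =>
    let ⟨_, _, hxy, hy, hyz⟩ := h x
    exists_reachesIn hxy hy hyz
  choose dist hdist using reach
  have step : ∀ s : {s : ℕ × T // ReachesIn r P s.1 s.2},
      ∃ s' : {s : ℕ × T // ReachesIn r P s.1 s.2},
        r s.1.2 s'.1.2 ∧ (P s.1.2 ∨ s.1.1 = s'.1.1 + 1) := by
    rintro ⟨⟨_ | n, x⟩, hx⟩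
    · obtain ⟨hPx, y, hxy⟩ := hx
      exact ⟨⟨(dist y, y), hdist y⟩, hxy, Or.inl hPx⟩
    · obtain ⟨y, hxy, hy⟩ := hx
      exact ⟨⟨(n, y), hy⟩, hxy, Or.inr rfl⟩
  choose next hnext using step
  obtain ⟨a⟩ := ‹Nonempty T›
  let s : ℕ → {s : ℕ × T // ReachesIn r P s.1 s.2} := fun i => next^[i] ⟨(dist a, a), hdist a⟩
  have s_succ : ∀ i, s (i + 1) = next (s i) := fun i => Function.iterate_succ_apply' _ _ _
  refine ⟨fun i => (s i).1.2, fun i => ?_, frequently_atTop.2 fun N => ?_⟩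
  · simpa only [s_succ] using (hnext (s i)).1
  by_contra! hnot
  have decreasing : ∀ j, (s N).1.1 = (s (N + j)).1.1 + j := fun j => by
    induction j with
    | zero => rfl
    | succ j ih =>
      have hstep := (hnext (s (N + j))).2.resolve_left (hnot _ (Nat.le_add_right _ _))
      rw [← s_succ] at hstep
      rw [ih, hstep, add_assoc, add_comm 1 j, add_assoc]
  have := decreasing ((s N).1.1 + 1)
  omega

/-- No infinite `r`-path sees an odd color infinitely often while never seeing a larger color.
Every tail of a path is a path, so this is the max-parity condition on all paths. -/
def NoOddPath (r : T → T → Prop) (col : T → ℕ) : Prop :=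
  ∀ t : ℕ → T, (∀ i, r (t i) (t (i + 1))) → ∀ p, Odd p → (∀ i, col (t i) ≤ p) →
    ¬ ∃ᶠ i in atTop, col (t i) = p

/-- `y` lies below `x`: it is reached from `x` through colors at most the odd number `p`, the last
step leaving a node of color `p`. The relation is empty for even `p`. -/
def OddDescent (r : T → T → Prop) (col : T → ℕ) (p : ℕ) (y x : T) : Prop :=
  Odd p ∧ ∃ x', ReflTransGen (fun u v => r u v ∧ col u ≤ p) x x' ∧ col x' = p ∧ r x' y

theorem OddDescent.head {x y z : T} (hxy : r x y) (hx : col x ≤ p) (h : OddDescent r col p z y) :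
    OddDescent r col p z x :=
  let ⟨hp, x', hpath, hx', hz⟩ := h
  ⟨hp, x', .head ⟨hxy, hx⟩ hpath, hx', hz⟩

theorem NoOddPath.wellFounded_oddDescent (h : NoOddPath r col) (p : ℕ) :
    WellFounded (OddDescent r col p) := by
  by_contra hwf
  have inaccessible : Nonempty {x // ¬ Acc (OddDescent r col p) x} :=
    nonempty_subtype.2 (by by_contra! hacc; exact hwf ⟨hacc⟩)
  let Step (u v : {x // ¬ Acc (OddDescent r col p) x}) : Prop := r u.1 v.1 ∧ col u.1 ≤ p
  have odd_p : Odd p := by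
    by_contra hp
    obtain ⟨x, hx⟩ := inaccessible
    exact hx ⟨_, fun y hy => (hp hy.1).elim⟩
  obtain ⟨t, hstep, hfreq⟩ := exists_path_frequently (r := Step) (P := fun u => col u.1 = p) <| by
    rintro ⟨x, hx⟩
    obtain ⟨y, ⟨-, x', hpath, hx', hy⟩, hyacc⟩ : ∃ y, OddDescent r col p y x ∧
        ¬ Acc (OddDescent r col p) y := by
      by_contra! hc
      exact hx ⟨x, hc⟩
    induction hpath using ReflTransGen.head_induction_on with
    | refl => exact ⟨⟨x', hx⟩, ⟨y, hyacc⟩, .refl, hx', hy, hx'.le⟩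
    | @head u v huv hv ih =>
      have hvacc : ¬ Acc (OddDescent r col p) v := fun hacc =>
        hyacc (hacc.inv ⟨odd_p, x', hv, hx', hy⟩)
      obtain ⟨a, b, hva, hab⟩ := ih hvacc
      exact ⟨a, b, .head huv hva, hab⟩
  exact h (fun i => (t i).1) (fun i => (hstep i).1) p odd_p (fun i => (hstep i).2) hfreq

/-- The `p`-th component of the progress measure: how often color `p` can still be seen before a
color larger than `p`. -/
def progress (h : NoOddPath r col) (p : ℕ) (x : T) : Ordinal :=
  ((h.wellFounded_oddDescent p).apply x).rank

theorem progress_le_of_step (h : NoOddPath r col) {x y : T} (hxy : r x y) (hx : col x ≤ p) :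
    progress h p y ≤ progress h p x := by
  rw [progress, Acc.rank_eq]
  exact Ordinal.iSup_le fun z => Order.succ_le_iff.2 <|
    Acc.rank_lt_of_rel _ (z.2.head hxy hx)

theorem progress_lt_of_step (h : NoOddPath r col) {x y : T} (hxy : r x y) (hp : Odd p)
    (hx : col x = p) : progress h p y < progress h p x :=
  Acc.rank_lt_of_rel _ ⟨hp, x, .refl, hx, hxy⟩

/-- The progress measure of `x` restricted to colors in `[p, D]`, larger colors being more
significant; the other components are set to `0`. -/
def signature (h : NoOddPath r col) (D p : ℕ) (x : T) : Lex (Fin (D + 1) → Ordinal) :=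
  toLex fun i => if p ≤ (i.rev : ℕ) then progress h i.rev x else 0

theorem signature_mono (h : NoOddPath r col) (D p : ℕ) {x y : T}
    (hxy : signature h D 0 x ≤ signature h D 0 y) : signature h D p x ≤ signature h D p y := by
  simp only [signature, Nat.zero_le, if_true] at hxy ⊢
  rcases hxy.eq_or_lt with heq | ⟨i, hbelow, hi⟩
  · exact le_of_eq (congrArg toLex (funext fun j => by simp only [congrFun (toLex_inj.1 heq) j]))
  have eq_below : ∀ j < i, progress h j.rev x = progress h j.rev y := hbelow
  by_cases hpi : p ≤ (i.rev : ℕ)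
  · refine le_of_lt ⟨i, fun j hj => ?_, ?_⟩
    · simp only [Pi.toLex_apply, eq_below j hj]
    · simpa only [Pi.toLex_apply, if_pos hpi] using hi
  · refine le_of_eq (congrArg toLex (funext fun j => ?_))
    by_cases hpj : p ≤ (j.rev : ℕ)
    · simp only [eq_below j (Fin.rev_lt_rev.1 (Fin.lt_def.2 (by omega)))]
    · simp only [if_neg hpj]

theorem signature_le_of_step (h : NoOddPath r col) (D : ℕ) {x y : T} (hxy : r x y)
    (hx : col x ≤ p) : signature h D p y ≤ signature h D p x :=
  Pi.toLex_monotone fun i => by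
    split_ifs with hp
    · exact progress_le_of_step h hxy (hx.trans hp)
    · exact le_rfl

theorem signature_lt_of_step (h : NoOddPath r col) {D : ℕ} {x y : T} (hxy : r x y) (hp : Odd p)
    (hx : col x = p) (hD : p ≤ D) : signature h D p y < signature h D p x := by
  have hrev : ((⟨D - p, by omega⟩ : Fin (D + 1)).rev : ℕ) = p := by simp only [Fin.val_rev]; omega
  refine lt_of_le_of_ne (signature_le_of_step h D hxy hx.le) fun heq => ?_
  have := congrFun (toLex_inj.1 heq) ⟨D - p, by omega⟩
  simp only [hrev, le_refl, if_true] at this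
  exact (progress_lt_of_step h hxy hp hx).ne this

theorem even_sup_of_cycle (h : NoOddPath r col) {D : ℕ} (hD : ∀ x, col x ≤ D) {s : ℕ → T}
    (hs : ∀ i, ∃ y, r (s i) y ∧ signature h D 0 (s (i + 1)) ≤ signature h D 0 y) {i j : ℕ}
    (hij : i < j) (heq : s i = s j) : Even ((Finset.Ico i j).sup fun l => col (s l)) := by
  set p := (Finset.Ico i j).sup fun l => col (s l)
  by_contra hp
  obtain ⟨l, hl, hlp⟩ := Finset.exists_mem_eq_sup _ (Finset.nonempty_Ico.2 hij) fun l => col (s l)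
  rw [Finset.mem_Ico] at hl
  have antitone : AntitoneOn (fun l => signature h D p (s l)) (Set.Icc i j) := by
    refine antitoneOn_of_add_one_le Set.ordConnected_Icc fun m _ hm hm' => ?_
    obtain ⟨y, hy, hle⟩ := hs m
    exact (signature_mono h D p hle).trans <| signature_le_of_step h D hy <|
      Finset.le_sup (f := fun l => col (s l)) (Finset.mem_Ico.2 ⟨hm.1, hm'.2⟩)
  obtain ⟨y, hy, hle⟩ := hs l
  have strict : signature h D p (s (l + 1)) < signature h D p (s l) :=
    (signature_mono h D p hle).trans_lt <| signature_lt_of_step h hy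
      (Nat.not_even_iff_odd.1 hp) hlp.symm (hlp.trans_le (hD _))
  have before := antitone ⟨le_rfl, hij.le⟩ ⟨hl.1, hl.2.le⟩ hl.1
  have after := antitone ⟨by omega, hl.2⟩ ⟨hij.le, le_rfl⟩ (Nat.succ_le_of_lt hl.2)
  simp only [heq] at before
  exact (after.trans_lt (strict.trans_le before)).false

theorem NoOddPath.exists_section [Nonempty T] (h : NoOddPath r col) {D : ℕ}
    (hD : ∀ x, col x ≤ D) {V : Type*} (π : T → V) :
    ∃ sel : V → T, (∀ t, π (sel (π t)) = π t) ∧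
      ∀ x : ℕ → V, (∀ i, ∃ y, r (sel (x i)) y ∧ π y = x (i + 1)) → ∀ i j, i < j → x i = x j →
        Even ((Finset.Ico i j).sup fun l => col (sel (x l))) := by
  have minimal : ∀ v, ∃ t, ∀ t', π t' = v → π t = v ∧ signature h D 0 t ≤ signature h D 0 t' := by
    intro v
    by_cases hv : ∃ t, π t = v
    · obtain ⟨t, ht, hmin⟩ :=
        (InvImage.wf (signature h D 0) wellFounded_lt).has_min {t | π t = v} hv
      exact ⟨t, fun t' ht' => ⟨ht, not_lt.1 (hmin t' ht')⟩⟩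
    · exact ⟨Classical.arbitrary T, fun t' ht' => (hv ⟨t', ht'⟩).elim⟩
  choose sel hsel using minimal
  refine ⟨sel, fun t => (hsel _ t rfl).1, fun x hx i j hij heq => ?_⟩
  refine even_sup_of_cycle h hD (s := fun i => sel (x i)) (fun i => ?_) hij (congrArg sel heq)
  obtain ⟨y, hy, hyx⟩ := hx i
  exact ⟨y, hy, (hsel _ y hyx).2⟩

end ProgressMeasures

section Plays

variable {A B I O : Type}

theorem length_seg (w : ℕ → A) (m n : ℕ) : (seg w m n).length = n - m := by
  simp only [seg, List.length_map, List.length_range]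

theorem getElem_seg (w : ℕ → A) (m n : ℕ) {j : ℕ} (hj : j < (seg w m n).length) :
    (seg w m n)[j] = w (m + j) := by
  simp only [seg, List.getElem_map, List.getElem_range]

theorem seg_self (w : ℕ → A) (m : ℕ) : seg w m m = [] := by
  simp only [seg, Nat.sub_self, List.range_zero, List.map_nil]

theorem seg_congr {w w' : ℕ → A} {n : ℕ} (h : Set.EqOn w w' (Set.Iio n)) (m : ℕ) :
    seg w m n = seg w' m n :=
  List.map_congr_left fun _ hj =>
    h (Nat.add_lt_of_lt_sub' (List.mem_range.1 hj))

theorem map_seg (g : A → B) (w : ℕ → A) (m n : ℕ) : (seg w m n).map g = seg (g ∘ w) m n := by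
  simp only [seg, List.map_map, Function.comp_def]

theorem seg_append_seg (w : ℕ → A) {a b c : ℕ} (hab : a ≤ b) (hbc : b ≤ c) :
    seg w a b ++ seg w b c = seg w a c := by
  simp only [seg]
  rw [show c - a = (b - a) + (c - b) by omega, List.range_add, List.map_append, List.map_map]
  refine congrArg _ (List.map_congr_left fun _ _ => ?_)
  simp only [Function.comp_apply, ← add_assoc, Nat.add_sub_of_le hab]

theorem seg_succ (w : ℕ → A) {m n : ℕ} (h : m ≤ n) : seg w m (n + 1) = seg w m n ++ [w n] := by
  rw [← seg_append_seg w h (n.le_add_right 1)]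
  simp only [seg, Nat.add_sub_cancel_left, List.range_one, List.map_cons, List.map_nil, add_zero]

/-- The number of letters Player I produces before round `i` under the delay function `f`. -/
def lettersBefore (f : ℕ → ℕ) (i : ℕ) : ℕ := ∑ j ∈ Finset.range i, f j

theorem lettersBefore_succ (f : ℕ → ℕ) (i : ℕ) :
    lettersBefore f (i + 1) = lettersBefore f i + f i :=
  Finset.sum_range_succ _ _

theorem monotone_lettersBefore (f : ℕ → ℕ) : Monotone (lettersBefore f) :=
  monotone_nat_of_le_succ fun i => by
    rw [lettersBefore_succ]
    exact Nat.le_add_right _ _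

theorem DelayFn.le_lettersBefore {f : ℕ → ℕ} (hf : DelayFn f) (i : ℕ) : i ≤ lettersBefore f i := by
  induction i with
  | zero => exact Nat.zero_le _
  | succ i ih =>
    rw [lettersBefore_succ]
    exact Nat.add_le_add ih (hf i)

theorem lettersBefore_constant (m j : ℕ) :
    lettersBefore (fun i => if i = 0 then m else 1) (j + 1) = m + j := by
  induction j with
  | zero => simp only [lettersBefore, zero_add, Finset.sum_range_one, if_true, add_zero]
  | succ j ih => rw [lettersBefore_succ, ih, if_neg j.succ_ne_zero, add_assoc]

theorem oHist_succ (u : ℕ → List I) (i : ℕ) : oHist u (i + 1) = oHist u i ++ u (i + 1) := by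
  simp only [oHist, List.range_succ (n := i + 1), List.map_append, List.flatten_append,
    List.map_cons, List.map_nil, List.flatten_singleton]

theorem length_oHist {f : ℕ → ℕ} {u : ℕ → List I} (hu : ∀ i, (u i).length = f i) (i : ℕ) :
    (oHist u i).length = lettersBefore f (i + 1) := by
  induction i with
  | zero => simp [oHist, lettersBefore, hu]
  | succ i ih => rw [oHist_succ, List.length_append, ih, hu, lettersBefore_succ f (i + 1)]

theorem oHist_prefix (u : ℕ → List I) {i j : ℕ} (h : i ≤ j) : oHist u i <+: oHist u j := by
  induction j, h using Nat.le_induction with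
  | base => exact List.prefix_rfl
  | succ j _ ih =>
    rw [oHist_succ]
    exact ih.trans (List.prefix_append _ _)

theorem DelayFn.oHist_eq_seg [Inhabited I] {f : ℕ → ℕ} (hf : DelayFn f) {u : ℕ → List I}
    (hu : ∀ i, (u i).length = f i) (i : ℕ) :
    oHist u i = seg (flatWord u) 0 (lettersBefore f (i + 1)) := by
  refine List.ext_getElem (by rw [length_oHist hu, length_seg, Nat.sub_zero]) fun j hj hj' => ?_
  have hjj : j < (oHist u j).length := by
    rw [length_oHist hu]
    exact hf.le_lettersBefore (j + 1)
  have flat : flatWord u j = (oHist u j)[j] := List.getD_eq_getElem _ _ hjj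
  rw [getElem_seg, zero_add, flat]
  rcases le_total i j with hij | hij
  · exact (oHist_prefix u hij).getElem hj
  · exact ((oHist_prefix u hij).getElem hjj).symm

/-- The outcome of the play in which Player I produces the word `α` and Player O follows `τ`. -/
def outcome (f : ℕ → ℕ) (τ : List I → O) (α : ℕ → I) : ℕ → I × O :=
  fun n => (α n, τ (seg α 0 (lettersBefore f (n + 1))))

theorem DelayFn.outcome_congr {f : ℕ → ℕ} (hf : DelayFn f) (τ : List I → O) {α β : ℕ → I}
    {b c : ℕ} (hbc : lettersBefore f b ≤ c) (h : Set.EqOn α β (Set.Iio c)) :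
    Set.EqOn (outcome f τ α) (outcome f τ β) (Set.Iio b) := fun j hj => by
  have seen : lettersBefore f (j + 1) ≤ c := (monotone_lettersBefore f hj).trans hbc
  simp only [outcome]
  rw [h ((hf.le_lettersBefore (j + 1)).trans seen),
    seg_congr (h.mono (Set.Iio_subset_Iio seen))]

theorem DelayFn.eq_outcome [Inhabited I] {f : ℕ → ℕ} (hf : DelayFn f) {τ : List I → O}
    {u : ℕ → List I} {v : ℕ → O} (hu : ∀ i, (u i).length = f i) (hv : ∀ i, v i = τ (oHist u i)) :
    (fun n => (flatWord u n, v n)) = outcome f τ (flatWord u) := by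
  funext n
  rw [hv, hf.oHist_eq_seg hu, outcome]

theorem DelayFn.exists_flatWord_eq [Inhabited I] {f : ℕ → ℕ} (hf : DelayFn f) (α : ℕ → I) :
    ∃ u : ℕ → List I, (∀ i, (u i).length = f i) ∧ flatWord u = α := by
  let u i := seg α (lettersBefore f i) (lettersBefore f (i + 1))
  have hist : ∀ i, oHist u i = seg α 0 (lettersBefore f (i + 1)) := fun i => by
    induction i with
    | zero => simp [oHist, u, lettersBefore]
    | succ i ih =>
      rw [oHist_succ, ih,
        seg_append_seg α (Nat.zero_le _) (monotone_lettersBefore f i.succ.le_succ)]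
  refine ⟨u, fun i => ?_, funext fun n => ?_⟩
  · rw [length_seg, lettersBefore_succ, Nat.add_sub_cancel_left]
  · have hn : n < (seg α 0 (lettersBefore f (n + 1))).length := by
      rw [length_seg, Nat.sub_zero]
      exact hf.le_lettersBefore (n + 1)
    change (oHist u n).getD n default = α n
    rw [hist, List.getD_eq_getElem _ _ hn, getElem_seg, zero_add]

theorem DelayFn.oWinning_iff [Inhabited I] {f : ℕ → ℕ} (hf : DelayFn f) {L : Set (ℕ → I × O)}
    {τ : List I → O} : OWinning f L τ ↔ ∀ α, outcome f τ α ∈ L := by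
  refine ⟨fun h α => ?_, fun h u v hu hv => hf.eq_outcome hu hv ▸ h _⟩
  obtain ⟨u, hu, rfl⟩ := hf.exists_flatWord_eq α
  exact hf.eq_outcome hu (fun _ => rfl) ▸ h u _ hu fun _ => rfl

theorem DelayFn.stratCost_le [Inhabited I] {f : ℕ → ℕ} (hf : DelayFn f)
    {wc : (ℕ → I × O) → ℕ∞} {τ : List I → O} {c : ℕ∞} (h : ∀ α, wc (outcome f τ α) ≤ c) :
    stratCost wc f τ ≤ c :=
  iSup_le fun _ => iSup_le fun _ => iSup_le fun ⟨hu, hv⟩ => hf.eq_outcome hu hv ▸ h _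

end Plays

namespace PACost

open Filter

variable {Q A : Type} (M : PACost Q A) (q₀ : Q)

section Runs

/-- The color of the `j`-th state of the run on `w` from `q₀`. -/
def color (w : ℕ → A) (j : ℕ) : ℕ := M.Ω (M.stateAt q₀ w j)

/-- Position `m` is an odd request that is not answered up to and including position `b`. -/
def OpenUntil (w : ℕ → A) (m b : ℕ) : Prop :=
  Odd (M.color q₀ w m) ∧
    ∀ j, m < j → j ≤ b → Even (M.color q₀ w j) → M.color q₀ w j ≤ M.color q₀ w m

variable {M q₀} {w w' : ℕ → A} {a b c m : ℕ}

theorem stateAt_congr (h : Set.EqOn w w' (Set.Iio b)) :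
    Set.EqOn (M.stateAt q₀ w) (M.stateAt q₀ w') (Set.Iic b) := fun j hj => by
  induction j with
  | zero => rfl
  | succ j ih => rw [stateAt, stateAt, ih (Nat.le_of_succ_le hj), h hj]

theorem color_congr (h : Set.EqOn w w' (Set.Iio b)) :
    Set.EqOn (M.color q₀ w) (M.color q₀ w') (Set.Iic b) := fun _ hj =>
  congrArg M.Ω (stateAt_congr h hj)

theorem segCost_congr (h : Set.EqOn w w' (Set.Iio b)) :
    M.segCost q₀ w a b = M.segCost q₀ w' a b := by
  refine congrArg Finset.card (Finset.filter_congr fun j hj => ?_)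
  have hjb := (Finset.mem_Ico.1 hj).2
  rw [stateAt_congr h hjb.le, h hjb]

theorem segCost_add (hab : a ≤ b) (hbc : b ≤ c) :
    M.segCost q₀ w a c = M.segCost q₀ w a b + M.segCost q₀ w b c := by
  simp only [segCost]
  rw [← Finset.Ico_union_Ico_eq_Ico hab hbc, Finset.filter_union, Finset.card_union_of_disjoint]
  exact Finset.disjoint_filter_filter (Finset.Ico_disjoint_Ico_consecutive a b c)

theorem segCost_mono_right (hbc : b ≤ c) : M.segCost q₀ w a b ≤ M.segCost q₀ w a c :=
  Finset.card_le_card (Finset.filter_subset_filter _ (Finset.Ico_subset_Ico_right hbc))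

theorem segCost_le (a b : ℕ) : M.segCost q₀ w a b ≤ b - a :=
  (Finset.card_filter_le _ _).trans_eq (Nat.card_Ico a b)

theorem segCost_self (a : ℕ) : M.segCost q₀ w a a = 0 :=
  Nat.eq_zero_of_le_zero ((segCost_le a a).trans_eq a.sub_self)

theorem segCost_succ_self (b : ℕ) :
    M.segCost q₀ w b (b + 1) = if M.Cst (M.stateAt q₀ w b) (w b) = true then 1 else 0 := by
  rw [segCost, Nat.Ico_succ_singleton, Finset.filter_singleton]
  split_ifs <;> rfl

theorem OpenUntil.refl (h : Odd (M.color q₀ w m)) : M.OpenUntil q₀ w m m :=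
  ⟨h, fun _ hmj hjm => (hmj.not_ge hjm).elim⟩

theorem OpenUntil.mono (h : M.OpenUntil q₀ w m c) (hbc : b ≤ c) : M.OpenUntil q₀ w m b :=
  ⟨h.1, fun j hmj hjb => h.2 j hmj (hjb.trans hbc)⟩

theorem OpenUntil.succ (h : M.OpenUntil q₀ w m b)
    (hb : Even (M.color q₀ w (b + 1)) → M.color q₀ w (b + 1) ≤ M.color q₀ w m) :
    M.OpenUntil q₀ w m (b + 1) := by
  refine ⟨h.1, fun j hmj hjb => ?_⟩
  rcases hjb.lt_or_eq with hj | rfl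
  · exact h.2 j hmj (Nat.le_of_lt_succ hj)
  · exact hb

theorem openUntil_congr (h : Set.EqOn w w' (Set.Iio b)) (hmb : m ≤ b) :
    M.OpenUntil q₀ w m b ↔ M.OpenUntil q₀ w' m b := by
  have hcolor : ∀ j ≤ b, M.color q₀ w j = M.color q₀ w' j := fun j hj => color_congr h hj
  rw [OpenUntil, OpenUntil, hcolor m hmb]
  exact and_congr_right fun _ => forall₃_congr fun j _ hj => by rw [hcolor j hj]

theorem cor_of_odd (h : Odd (M.color q₀ w m)) :
    M.Cor q₀ w m = sInf {c : ℕ∞ | ∃ n, m < n ∧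
      M.color q₀ w n ∈ M.Ans (M.color q₀ w m) ∧ c = (M.segCost q₀ w m n : ℕ∞)} :=
  if_neg (Nat.not_even_iff_odd.2 h)

theorem OpenUntil.segCost_le_cor (h : M.OpenUntil q₀ w m b) :
    (M.segCost q₀ w m b : ℕ∞) ≤ M.Cor q₀ w m := by
  rw [cor_of_odd h.1]
  refine le_sInf ?_
  rintro _ ⟨n, hmn, ⟨-, hlt, heven⟩, rfl⟩
  have answered_later : b < n := by
    by_contra! hnb
    exact (h.2 n hmn hnb heven).not_gt hlt
  exact_mod_cast segCost_mono_right answered_later.le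

theorem cor_eq_top (h : ∀ b, M.OpenUntil q₀ w m b) : M.Cor q₀ w m = ⊤ := by
  rw [cor_of_odd (h m).1, sInf_eq_top]
  rintro _ ⟨n, hmn, ⟨-, hlt, heven⟩, -⟩
  exact (((h n).2 n hmn le_rfl heven).not_gt hlt).elim

theorem cor_le_segCost {n : ℕ} (hmn : m < n) (heven : Even (M.color q₀ w n))
    (hlt : M.color q₀ w m < M.color q₀ w n) : M.Cor q₀ w m ≤ M.segCost q₀ w m n := by
  rw [Cor]
  split_ifs
  · exact bot_le
  · exact sInf_le ⟨n, hmn, ⟨⟨_, rfl⟩, hlt, heven⟩, rfl⟩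

theorem Accepting.exists_eventually_cor_le (h : M.Accepting q₀ w) :
    ∃ B : ℕ, ∀ᶠ m in atTop, M.Cor q₀ w m ≤ B := by
  obtain ⟨B, hB⟩ := ENat.ne_top_iff_exists.1 (ne_of_lt h)
  have hlt : limsup (fun n => M.Cor q₀ w n) atTop < ((B + 1 : ℕ) : ℕ∞) := by
    rw [← hB]
    exact_mod_cast B.lt_succ_self
  exact ⟨B + 1, (eventually_lt_of_limsup_lt hlt).mono fun _ hm => hm.le⟩

end Runs

section Summaries

/-- The effect of a finite run on the acceptance condition: the state reached, the largest even
color visited (`answer`), the largest color of a request left open (`request`), and whether an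
increment-transition was taken (`incr`). The state the run starts in does not count as visited, and
`0` stands for the absence of an answer or request. -/
structure Summary (Q : Type) where
  state : Q
  answer : ℕ
  request : ℕ
  incr : Bool

namespace Summary

/-- The largest open request after a run with summary `s` that starts with open request `o`. -/
def carry (o : ℕ) (s : Summary Q) : ℕ := max (if o < s.answer then 0 else o) s.request

/-- The summary of the concatenation of two runs. -/
def append (s t : Summary Q) : Summary Q :=
  ⟨t.state, max s.answer t.answer, carry s.request t, s.incr || t.incr⟩

theorem carry_append (o : ℕ) (s t : Summary Q) :
    carry o (s.append t) = carry (carry o s) t := by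
  simp only [carry, append, max_def]
  grind

theorem append_assoc (s t u : Summary Q) : (s.append t).append u = s.append (t.append u) := by
  simp only [append, mk.injEq, max_assoc, Bool.or_assoc, true_and, and_true]
  exact (carry_append s.request t u).symm

end Summary

/-- The summary of the transition from `q` on the letter `a`. -/
def letterSummary (q : Q) (a : A) : Summary Q :=
  let c := M.Ω (M.δ q a)
  ⟨M.δ q a, if Even c then c else 0, if Even c then 0 else c, M.Cst q a⟩

/-- The summary of the run from `q` on a finite word. -/
def summary (q : Q) (z : List A) : Summary Q :=
  z.foldl (fun s a => s.append (M.letterSummary s.state a)) ⟨q, 0, 0, false⟩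

theorem summary_concat (q : Q) (z : List A) (a : A) :
    M.summary q (z ++ [a]) =
      (M.summary q z).append (M.letterSummary (M.summary q z).state a) := by
  simp only [summary, List.foldl_append, List.foldl_cons, List.foldl_nil]

theorem summary_append (q : Q) (y z : List A) :
    M.summary q (y ++ z) = (M.summary q y).append (M.summary (M.summary q y).state z) := by
  induction z using List.reverseRecOn with
  | nil => simp [summary, Summary.append, Summary.carry]
  | append_singleton z a ih =>
    rw [← List.append_assoc, summary_concat, summary_concat, ih, Summary.append_assoc]
    rfl

/-- The summary of the infix `(a, b]` of the run on `w` from `q₀`. -/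
def summaryOn (w : ℕ → A) (a b : ℕ) : Summary Q := M.summary (M.stateAt q₀ w a) (seg w a b)

variable {M q₀} {w w' : ℕ → A} {a b c m : ℕ}

theorem summaryOn_congr (h : Set.EqOn w w' (Set.Iio b)) (hab : a ≤ b) :
    M.summaryOn q₀ w a b = M.summaryOn q₀ w' a b := by
  rw [summaryOn, summaryOn, stateAt_congr h hab, seg_congr h]

theorem summaryOn_self (a : ℕ) : M.summaryOn q₀ w a a = ⟨M.stateAt q₀ w a, 0, 0, false⟩ := by
  rw [summaryOn, seg_self]
  rfl

theorem state_summaryOn (hab : a ≤ b) : (M.summaryOn q₀ w a b).state = M.stateAt q₀ w b := by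
  induction b, hab using Nat.le_induction with
  | base => rw [summaryOn_self]
  | succ b hab ih =>
    rw [summaryOn, seg_succ w hab, summary_append, ← summaryOn, ih]
    rfl

theorem summaryOn_trans (hab : a ≤ b) (hbc : b ≤ c) :
    M.summaryOn q₀ w a c = (M.summaryOn q₀ w a b).append (M.summaryOn q₀ w b c) := by
  rw [summaryOn, ← seg_append_seg w hab hbc, summary_append, ← summaryOn, state_summaryOn hab,
    ← summaryOn]

theorem summaryOn_succ_self (b : ℕ) :
    M.summaryOn q₀ w b (b + 1) = M.letterSummary (M.stateAt q₀ w b) (w b) := by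
  rw [summaryOn, seg_succ w le_rfl, seg_self]
  simp [summary, Summary.append, Summary.carry, letterSummary]

theorem answer_summaryOn_succ (hab : a ≤ b) :
    (M.summaryOn q₀ w a (b + 1)).answer =
      max (M.summaryOn q₀ w a b).answer
        (if Even (M.color q₀ w (b + 1)) then M.color q₀ w (b + 1) else 0) := by
  rw [summaryOn_trans hab b.le_succ, summaryOn_succ_self]
  rfl

theorem request_summaryOn_succ (hab : a ≤ b) :
    (M.summaryOn q₀ w a (b + 1)).request =
      if Even (M.color q₀ w (b + 1)) then
        if (M.summaryOn q₀ w a b).request < M.color q₀ w (b + 1) then 0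
        else (M.summaryOn q₀ w a b).request
      else max (M.summaryOn q₀ w a b).request (M.color q₀ w (b + 1)) := by
  have hletter : M.Ω (M.δ (M.stateAt q₀ w b) (w b)) = M.color q₀ w (b + 1) := rfl
  rw [summaryOn_trans hab b.le_succ, summaryOn_succ_self]
  simp only [Summary.append, Summary.carry, letterSummary, hletter]
  by_cases h : Even (M.color q₀ w (b + 1)) <;> simp [h]

theorem incr_summaryOn_iff (hab : a ≤ b) :
    (M.summaryOn q₀ w a b).incr = true ↔ 0 < M.segCost q₀ w a b := by
  induction b, hab using Nat.le_induction with
  | base => simp [summaryOn_self, segCost_self]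
  | succ b hab ih =>
    rw [summaryOn_trans hab b.le_succ, segCost_add hab b.le_succ, summaryOn_succ_self,
      segCost_succ_self, Summary.append, Bool.or_eq_true, ih]
    cases h : M.Cst (M.stateAt q₀ w b) (w b) <;> simp [letterSummary, h]

theorem even_answer (hab : a ≤ b) : Even (M.summaryOn q₀ w a b).answer := by
  induction b, hab using Nat.le_induction with
  | base => simp only [summaryOn_self, Even.zero]
  | succ b hab ih =>
    rw [answer_summaryOn_succ hab]
    refine max_rec' _ ih ?_
    split_ifs with h
    · exact h
    · exact Even.zero

theorem color_le_answer (ham : a < m) (hmb : m ≤ b) (hm : Even (M.color q₀ w m)) :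
    M.color q₀ w m ≤ (M.summaryOn q₀ w a b).answer := by
  induction b, hmb using Nat.le_induction with
  | base =>
    obtain ⟨m, rfl⟩ := Nat.exists_eq_add_one_of_ne_zero (Nat.ne_zero_of_lt ham)
    rw [answer_summaryOn_succ (Nat.le_of_lt_succ ham), if_pos hm]
    exact le_max_right _ _
  | succ b hmb ih =>
    rw [answer_summaryOn_succ (ham.le.trans hmb)]
    exact ih.trans (le_max_left _ _)

theorem exists_color_eq_answer (hab : a ≤ b) (h : (M.summaryOn q₀ w a b).answer ≠ 0) :
    ∃ m, a < m ∧ m ≤ b ∧ M.color q₀ w m = (M.summaryOn q₀ w a b).answer := by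
  induction b, hab using Nat.le_induction with
  | base => exact (h (by rw [summaryOn_self])).elim
  | succ b hab ih =>
    rw [answer_summaryOn_succ hab] at h ⊢
    rcases max_choice (M.summaryOn q₀ w a b).answer
      (if Even (M.color q₀ w (b + 1)) then M.color q₀ w (b + 1) else 0) with hmax | hmax
    · rw [hmax] at h ⊢
      obtain ⟨m, ham, hmb, hm⟩ := ih h
      exact ⟨m, ham, hmb.trans b.le_succ, hm⟩
    · rw [hmax] at h ⊢
      split_ifs at h ⊢ with heven
      · exact ⟨b + 1, Nat.lt_succ_of_le hab, le_rfl, rfl⟩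
      · exact (h rfl).elim

theorem exists_openUntil_of_request_ne_zero (hab : a ≤ b)
    (h : (M.summaryOn q₀ w a b).request ≠ 0) :
    ∃ m, a < m ∧ m ≤ b ∧ M.color q₀ w m = (M.summaryOn q₀ w a b).request ∧
      M.OpenUntil q₀ w m b := by
  induction b, hab using Nat.le_induction with
  | base => exact (h (by rw [summaryOn_self])).elim
  | succ b hab ih =>
    have still_open (hr : (M.summaryOn q₀ w a b).request ≠ 0)
        (hb : Even (M.color q₀ w (b + 1)) →
          M.color q₀ w (b + 1) ≤ (M.summaryOn q₀ w a b).request) :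
        ∃ m, a < m ∧ m ≤ b + 1 ∧ M.color q₀ w m = (M.summaryOn q₀ w a b).request ∧
          M.OpenUntil q₀ w m (b + 1) := by
      obtain ⟨m, ham, hmb, hm, hopen⟩ := ih hr
      exact ⟨m, ham, hmb.trans b.le_succ, hm, hopen.succ (by rwa [hm])⟩
    rw [request_summaryOn_succ hab] at h ⊢
    split_ifs at h ⊢ with heven hlt
    · exact (h rfl).elim
    · exact still_open h fun _ => not_lt.1 hlt
    · rcases max_choice (M.summaryOn q₀ w a b).request (M.color q₀ w (b + 1)) with hmax | hmax
      · rw [hmax] at h ⊢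
        exact still_open h fun hb => (heven hb).elim
      · rw [hmax]
        exact ⟨b + 1, Nat.lt_succ_of_le hab, le_rfl, rfl, .refl (Nat.not_even_iff_odd.1 heven)⟩

theorem odd_request (hab : a ≤ b) (h : (M.summaryOn q₀ w a b).request ≠ 0) :
    Odd (M.summaryOn q₀ w a b).request :=
  let ⟨_, _, _, hm, hopen⟩ := exists_openUntil_of_request_ne_zero hab h
  hm ▸ hopen.1

theorem OpenUntil.color_le_request (h : M.OpenUntil q₀ w m b) (ham : a < m) (hmb : m ≤ b) :
    M.color q₀ w m ≤ (M.summaryOn q₀ w a b).request := by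
  induction b, hmb using Nat.le_induction with
  | base =>
    obtain ⟨m, rfl⟩ := Nat.exists_eq_add_one_of_ne_zero (Nat.ne_zero_of_lt ham)
    rw [request_summaryOn_succ (Nat.le_of_lt_succ ham), if_neg (Nat.not_even_iff_odd.2 h.1)]
    exact le_max_right _ _
  | succ b hmb ih =>
    have hle := ih (h.mono b.le_succ)
    rw [request_summaryOn_succ (ham.le.trans hmb)]
    split_ifs with heven hlt
    · exact ((h.2 (b + 1) (Nat.lt_succ_of_le hmb) le_rfl heven).trans hle |>.not_gt hlt).elim
    · exact hle
    · exact hle.trans (le_max_left _ _)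

end Summaries

end PACost

section Profiles

theorem exists_long_eq_of_card_le {A β : Type*} {g : List A → β} {S : Finset β}
    (hS : ∀ w, g w ∈ S) (hg : ∀ u u' v, g u = g u' → g (u ++ v) = g (u' ++ v)) {w : List A}
    (hw : S.card ≤ w.length) (L : ℕ) : ∃ w', L ≤ w'.length ∧ g w' = g w := by
  obtain ⟨i, j, hij, hj, heq⟩ : ∃ i j, i < j ∧ j ≤ w.length ∧ g (w.take i) = g (w.take j) := by
    obtain ⟨i, hi, j, hj, hne, heq⟩ := Finset.exists_ne_map_eq_of_card_lt_of_maps_to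
      (s := Finset.range (w.length + 1)) (f := fun i => g (w.take i))
      (by rw [Finset.card_range]; omega) fun i _ => hS (w.take i)
    rw [Finset.mem_range] at hi hj
    rcases hne.lt_or_gt with h | h
    · exact ⟨i, j, h, by omega, heq⟩
    · exact ⟨j, i, h, by omega, heq.symm⟩
  have take_append : w.take i ++ (w.take j).drop i = w.take j := by
    rw [← List.take_append_drop i (w.take j), List.take_take, min_eq_left hij.le,
      List.drop_left' (by rw [List.length_take]; omega)]
  have pump : ∀ L, ∃ u, L ≤ u.length ∧ g u = g (w.take j) := fun L => by
    induction L with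
    | zero => exact ⟨_, Nat.zero_le _, rfl⟩
    | succ L ih =>
      obtain ⟨u, hL, hu⟩ := ih
      refine ⟨u ++ (w.take j).drop i, ?_, ?_⟩
      · rw [List.length_append, List.length_drop, List.length_take]
        omega
      · rw [hg u _ _ (hu.trans heq.symm), take_append]
  obtain ⟨u, hL, hu⟩ := pump L
  refine ⟨u ++ w.drop j, ?_, ?_⟩
  · rw [List.length_append]
    exact hL.trans (Nat.le_add_right _ _)
  · rw [hg u _ _ hu, List.take_append_drop]

namespace PACost

variable {Q A I O : Type} [Fintype Q]

/-- The colors of `M`, together with the value `0` that stands for no request or answer. -/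
def colors (M : PACost Q A) : Finset ℕ := insert 0 (Finset.univ.image M.Ω)

theorem card_colors_le (M : PACost Q A) :
    M.colors.card ≤ (Finset.univ.image M.Ω).card + 1 :=
  Finset.card_insert_le _ _

theorem zero_mem_colors (M : PACost Q A) : 0 ∈ M.colors := Finset.mem_insert_self _ _

theorem Ω_mem_colors (M : PACost Q A) (q : Q) : M.Ω q ∈ M.colors :=
  Finset.mem_insert_of_mem (Finset.mem_image_of_mem _ (Finset.mem_univ q))

theorem carry_mem_colors {M : PACost Q A} {o : ℕ} {s : Summary Q} (ho : o ∈ M.colors)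
    (hs : s.request ∈ M.colors) : s.carry o ∈ M.colors := by
  have kept : (if o < s.answer then 0 else o) ∈ M.colors := by
    split_ifs
    exacts [M.zero_mem_colors, ho]
  exact max_rec' (· ∈ M.colors) kept hs

/-- The finite set of all candidates for summaries of runs of `M`. -/
def summaries (M : PACost Q A) : Finset (Summary Q) :=
  (Finset.univ ×ˢ M.colors ×ˢ M.colors ×ˢ Finset.univ).image fun x =>
    ⟨x.1, x.2.1, x.2.2.1, x.2.2.2⟩

theorem mem_summaries {M : PACost Q A} {s : Summary Q} :
    s ∈ M.summaries ↔ s.answer ∈ M.colors ∧ s.request ∈ M.colors := by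
  simp only [summaries, Finset.mem_image, Finset.mem_product, Finset.mem_univ, true_and, and_true]
  constructor
  · rintro ⟨x, hx, rfl⟩
    exact hx
  · exact fun hs => ⟨(s.state, s.answer, s.request, s.incr), hs, rfl⟩

theorem card_summaries_le (M : PACost Q A) :
    M.summaries.card ≤ Fintype.card Q * (M.colors.card * (M.colors.card * 2)) := by
  refine Finset.card_image_le.trans_eq ?_
  simp only [Finset.card_product, Finset.card_univ, Fintype.card_bool]

theorem append_mem_summaries {M : PACost Q A} {s t : Summary Q} (hs : s ∈ M.summaries)
    (ht : t ∈ M.summaries) : s.append t ∈ M.summaries := by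
  rw [mem_summaries] at hs ht ⊢
  exact ⟨max_rec' (· ∈ M.colors) hs.1 ht.1, carry_mem_colors hs.2 ht.2⟩

theorem letterSummary_mem_summaries (M : PACost Q A) (q : Q) (a : A) :
    M.letterSummary q a ∈ M.summaries := by
  rw [mem_summaries, letterSummary]
  by_cases heven : Even (M.Ω (M.δ q a))
  · simp only [if_pos heven, M.Ω_mem_colors, M.zero_mem_colors, and_self]
  · simp only [if_neg heven, M.Ω_mem_colors, M.zero_mem_colors, and_self]

theorem summary_mem_summaries (M : PACost Q A) (q : Q) (z : List A) :
    M.summary q z ∈ M.summaries := by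
  induction z using List.reverseRecOn with
  | nil => exact mem_summaries.2 ⟨M.zero_mem_colors, M.zero_mem_colors⟩
  | append_singleton z a ih =>
    rw [summary_concat]
    exact append_mem_summaries ih (M.letterSummary_mem_summaries _ _)

/-- The profile of an input word: all pairs of a state `q` and a summary that Player O can achieve
from `q` on that word by choosing the output. -/
def profile (M : PACost Q (I × O)) (w : List I) : Finset (Q × Summary Q) :=
  (Finset.univ ×ˢ M.summaries).filter fun x => ∃ z : List (I × O), z.map Prod.fst = w ∧
    M.summary x.1 z = x.2

variable {M : PACost Q (I × O)}

theorem mem_profile {w : List I} {q : Q} {s : Summary Q} :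
    (q, s) ∈ M.profile w ↔ ∃ z : List (I × O), z.map Prod.fst = w ∧ M.summary q z = s := by
  simp only [profile, Finset.mem_filter, Finset.mem_product, Finset.mem_univ, true_and,
    and_iff_right_iff_imp]
  rintro ⟨z, -, rfl⟩
  exact M.summary_mem_summaries q z

theorem profile_mem_powerset (w : List I) :
    M.profile w ∈ (Finset.univ ×ˢ M.summaries : Finset (Q × Summary Q)).powerset :=
  Finset.mem_powerset.2 (Finset.filter_subset _ _)

theorem summaryOn_mem_profile (q₀ : Q) (w : ℕ → I × O) (a b : ℕ) :
    (M.stateAt q₀ w a, M.summaryOn q₀ w a b) ∈ M.profile (seg (Prod.fst ∘ w) a b) :=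
  mem_profile.2 ⟨seg w a b, map_seg _ _ _ _, rfl⟩

theorem profile_append_subset {u u' : List I} (h : M.profile u = M.profile u') (v : List I) :
    M.profile (u ++ v) ⊆ M.profile (u' ++ v) := by
  rintro ⟨q, s⟩ hs
  obtain ⟨z, hz, rfl⟩ := mem_profile.1 hs
  obtain ⟨y, x, rfl, hy, hx⟩ := List.map_eq_append_iff.1 hz
  obtain ⟨y', hy', heq⟩ := mem_profile.1 (h ▸ mem_profile.2 ⟨y, hy, rfl⟩ :
    (q, M.summary q y) ∈ M.profile u')
  refine mem_profile.2 ⟨y' ++ x, by rw [List.map_append, hy', hx], ?_⟩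
  rw [summary_append, summary_append, heq]

theorem profile_append_congr {u u' : List I} (h : M.profile u = M.profile u') (v : List I) :
    M.profile (u ++ v) = M.profile (u' ++ v) :=
  (profile_append_subset h v).antisymm (profile_append_subset h.symm v)

/-- A profile that is realized by arbitrarily long input words. -/
def Pumpable (M : PACost Q (I × O)) (C : Finset (Q × Summary Q)) : Prop :=
  ∀ L : ℕ, ∃ w : List I, L ≤ w.length ∧ M.profile w = C

theorem pumpable_profile {w : List I}
    (hw : 2 ^ (Finset.univ ×ˢ M.summaries : Finset (Q × Summary Q)).card ≤ w.length) :
    M.Pumpable (M.profile w) :=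
  exists_long_eq_of_card_le profile_mem_powerset (fun _ _ v h => profile_append_congr h v)
    ((Finset.card_powerset _).trans_le hw)

end PACost

end Profiles

section WordParity

open Filter

theorem exists_mem_Ioc_of_strictMono {A : ℕ → ℕ} (hA : StrictMono A) {i j : ℕ} (hj : A i < j) :
    ∃ k, i ≤ k ∧ A k < j ∧ j ≤ A (k + 1) := by
  have reach : ∃ l, j ≤ A (i + l) := ⟨j, (hA.le_apply (x := i + j)).trans' (Nat.le_add_left _ _)⟩
  obtain ⟨l, hl⟩ := Nat.exists_eq_add_one_of_ne_zero fun h0 : Nat.find reach = 0 =>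
    hj.not_ge (by simpa only [h0, add_zero] using Nat.find_spec reach)
  exact ⟨i + l, Nat.le_add_right _ _, not_le.1 (Nat.find_min reach (by omega)),
    by simpa only [hl, add_assoc] using Nat.find_spec reach⟩

namespace PACost

/-- The color a block with summary `s` contributes when it is entered with the open request `o`: an
open request counts if it is raised in the block, or if it is carried through at positive cost. -/
def Summary.blockColor {Q : Type} (o : ℕ) (s : Summary Q) : ℕ :=
  max (max s.answer s.request) (if s.incr then o else 0)

variable {Q A : Type}

/-- Some request raised at or after position `r` is still open at position `b`, and it has been
open for a cost of at least `r`. Using `r` as the cost threshold makes the threshold grow with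
every reset of `r`. -/
def Overdue (M : PACost Q A) (q₀ : Q) (w : ℕ → A) (r b : ℕ) : Prop :=
  ∃ m, r ≤ m ∧ m ≤ b ∧ M.OpenUntil q₀ w m b ∧ r ≤ M.segCost q₀ w m b

variable {M : PACost Q A} {q₀ : Q} {w w' : ℕ → A} {a b p r : ℕ} {cut : ℕ → ℕ}

theorem overdue_congr (h : Set.EqOn w w' (Set.Iio b)) :
    M.Overdue q₀ w r b ↔ M.Overdue q₀ w' r b :=
  exists_congr fun _ => and_congr_right fun _ => and_congr_right fun hmb => by
    rw [openUntil_congr h hmb, segCost_congr h]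

theorem OpenUntil.forever (hcut : StrictMono cut)
    (hanswer : ∀ i, (M.summaryOn q₀ w (cut i) (cut (i + 1))).answer ≤ p) {m i : ℕ}
    (h : M.OpenUntil q₀ w m (cut i)) (hm : M.color q₀ w m = p) (b : ℕ) :
    M.OpenUntil q₀ w m b := by
  refine ⟨h.1, fun j hmj _ heven => ?_⟩
  rcases le_or_gt j (cut i) with hj | hj
  · exact h.2 j hmj hj heven
  · obtain ⟨k, -, hk, hk'⟩ := exists_mem_Ioc_of_strictMono hcut hj
    exact hm ▸ (color_le_answer hk hk' heven).trans (hanswer k)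

theorem frequently_cor_eq_top (hcut : StrictMono cut)
    (hanswer : ∀ i, (M.summaryOn q₀ w (cut i) (cut (i + 1))).answer ≤ p) (hp : Odd p)
    (hfreq : ∃ᶠ i in atTop, (M.summaryOn q₀ w (cut i) (cut (i + 1))).request = p) :
    ∃ᶠ m in atTop, M.Cor q₀ w m = ⊤ := by
  refine frequently_atTop.2 fun N => ?_
  obtain ⟨i, hNi, hi⟩ := frequently_atTop.1 hfreq N
  obtain ⟨m, him, -, hm, hopen⟩ :=
    exists_openUntil_of_request_ne_zero (hcut i.lt_succ_self).le (hi ▸ hp.pos.ne')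
  exact ⟨m, hNi.trans (hcut.le_apply.trans him.le),
    cor_eq_top (hopen.forever hcut hanswer (hm.trans hi))⟩

theorem exists_open_forever (hcut : StrictMono cut)
    (hanswer : ∀ i, (M.summaryOn q₀ w (cut i) (cut (i + 1))).answer ≤ p) (hp : Odd p)
    (hr : r ≤ cut 0)
    (hfreq : ∃ᶠ i in atTop, (M.summaryOn q₀ w (cut i) (cut (i + 1))).incr = true ∧
      (M.summaryOn q₀ w r (cut i)).request = p) :
    ∃ m, r < m ∧ (∀ b, M.OpenUntil q₀ w m b) ∧
      ∀ c, ∃ i, m ≤ cut (i + 1) ∧ c ≤ M.segCost q₀ w m (cut (i + 1)) := by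
  obtain ⟨i₀, -, hi₀⟩ := hfreq.exists
  obtain ⟨m, hrm, hmi, hm, hopen⟩ := exists_openUntil_of_request_ne_zero
    (hr.trans (hcut.monotone i₀.zero_le)) (hi₀ ▸ hp.pos.ne')
  refine ⟨m, hrm, hopen.forever hcut hanswer (hm.trans hi₀), fun c => ?_⟩
  induction c with
  | zero => exact ⟨i₀, hmi.trans (hcut.monotone i₀.le_succ), Nat.zero_le _⟩
  | succ c ih =>
    obtain ⟨i, -, hi⟩ := ih
    obtain ⟨j, hj, hincr, -⟩ := frequently_atTop.1 hfreq (max (i + 1) i₀)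
    have hstep : cut j ≤ cut (j + 1) := hcut.monotone j.le_succ
    have positive := (incr_summaryOn_iff hstep).1 hincr
    have hij : M.segCost q₀ w m (cut (i + 1)) ≤ M.segCost q₀ w m (cut j) :=
      segCost_mono_right (hcut.monotone (le_of_max_le_left hj))
    have hmj : m ≤ cut j := hmi.trans (hcut.monotone (le_of_max_le_right hj))
    refine ⟨j, hmj.trans hstep, ?_⟩
    rw [segCost_add hmj hstep]
    omega

theorem overdue_of_frequently_blockColor (hw : M.Accepting q₀ w) (hcut : StrictMono cut)
    (hr : r ≤ cut 0) (hp : Odd p)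
    (hle : ∀ i, (M.summaryOn q₀ w (cut i) (cut (i + 1))).blockColor
      (M.summaryOn q₀ w r (cut i)).request ≤ p)
    (hfreq : ∃ᶠ i in atTop, (M.summaryOn q₀ w (cut i) (cut (i + 1))).blockColor
      (M.summaryOn q₀ w r (cut i)).request = p) :
    ∃ i, M.Overdue q₀ w r (cut (i + 1)) := by
  have hanswer : ∀ i, (M.summaryOn q₀ w (cut i) (cut (i + 1))).answer ≤ p := fun i =>
    ((le_max_left _ _).trans (le_max_left _ _)).trans (hle i)
  have cause : ∃ᶠ i in atTop, (M.summaryOn q₀ w (cut i) (cut (i + 1))).request = p ∨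
      (M.summaryOn q₀ w (cut i) (cut (i + 1))).incr = true ∧
        (M.summaryOn q₀ w r (cut i)).request = p := hfreq.mono fun i hi => by
    have answer_ne : (M.summaryOn q₀ w (cut i) (cut (i + 1))).answer ≠ p := fun h =>
      Nat.not_even_iff_odd.2 hp (h ▸ even_answer (hcut i.lt_succ_self).le)
    have := hp.pos
    rw [Summary.blockColor] at hi
    split_ifs at hi with hincr <;> simp only [hincr, true_and] <;> omega
  rcases frequently_or_distrib.1 cause with hrequest | hcarried
  · obtain ⟨B, hB⟩ := hw.exists_eventually_cor_le
    obtain ⟨m, htop, hle⟩ := ((frequently_cor_eq_top hcut hanswer hp hrequest).and_eventually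
      hB).exists
    exact ((htop ▸ hle).not_gt (ENat.natCast_lt_top B)).elim
  · obtain ⟨m, hrm, hopen, hcost⟩ := exists_open_forever hcut hanswer hp hr hcarried
    obtain ⟨i, hmi, hi⟩ := hcost r
    exact ⟨i, m, hrm.le, hmi, hopen _, hi⟩

theorem Accepting.eventually_not_overdue (hw : M.Accepting q₀ w) (hcut : StrictMono cut)
    {reset : ℕ → ℕ} (hreset : ∀ i, reset i ≤ cut i)
    (hsucc : ∀ i, reset (i + 1) =
      if M.Overdue q₀ w (reset i) (cut (i + 1)) then cut (i + 1) else reset i) :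
    ∀ᶠ i in atTop, ¬ M.Overdue q₀ w (reset i) (cut (i + 1)) := by
  obtain ⟨B, hB⟩ := hw.exists_eventually_cor_le
  obtain ⟨N, hN⟩ := eventually_atTop.1 hB
  by_contra hnot
  have hfreq : ∃ᶠ i in atTop, M.Overdue q₀ w (reset i) (cut (i + 1)) :=
    (not_eventually.1 hnot).mono fun _ => not_not.1
  have hmono : Monotone reset := monotone_nat_of_le_succ fun i => by
    rw [hsucc]
    split_ifs
    exacts [(hreset i).trans (hcut.monotone i.le_succ), le_rfl]
  have htop : Tendsto reset atTop atTop := tendsto_atTop_atTop_of_monotone hmono fun n => by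
    obtain ⟨i, hni, hi⟩ := frequently_atTop.1 hfreq n
    refine ⟨i + 1, ?_⟩
    rw [hsucc, if_pos hi]
    exact (hni.trans i.le_succ).trans hcut.le_apply
  obtain ⟨i, hover, hi⟩ := (Frequently.and_eventually hfreq
    (htop.eventually_ge_atTop (max N (B + 1)))).exists
  obtain ⟨m, hrm, -, hopen, hcost⟩ := hover
  have cor_le := (hopen.segCost_le_cor).trans (hN m (by omega))
  have : M.segCost q₀ w m (cut (i + 1)) ≤ B := by exact_mod_cast cor_le
  omega

section TopColor

variable [Fintype Q]

/-- An odd number larger than all colors. -/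
def topColor (M : PACost Q A) : ℕ := 2 * M.colors.sup id + 1

theorem le_topColor {c : ℕ} (hc : c ∈ M.colors) : c ≤ M.topColor := by
  have : c ≤ M.colors.sup id := Finset.le_sup (f := id) hc
  rw [topColor]
  omega

theorem blockColor_mem_colors {o : ℕ} {s : Summary Q} (hs : s ∈ M.summaries)
    (ho : o ∈ M.colors) : s.blockColor o ∈ M.colors := by
  have hs := mem_summaries.1 hs
  have carried : (if s.incr then o else 0) ∈ M.colors := by
    split_ifs
    exacts [ho, M.zero_mem_colors]
  exact max_rec' (· ∈ M.colors) (max_rec' (· ∈ M.colors) hs.1 hs.2) carried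

/-- The color of the block `(a, b]` in the max-parity abstraction of the parity condition with
costs, where only requests raised after the reset position `r` are tracked. -/
def stageColor (M : PACost Q A) (q₀ : Q) (w : ℕ → A) (r a b : ℕ) : ℕ :=
  if M.Overdue q₀ w r b then M.topColor
  else (M.summaryOn q₀ w a b).blockColor (M.summaryOn q₀ w r a).request

theorem stageColor_congr (h : Set.EqOn w w' (Set.Iio b)) (hra : r ≤ a) (hab : a ≤ b) :
    M.stageColor q₀ w r a b = M.stageColor q₀ w' r a b := by
  rw [stageColor, stageColor, summaryOn_congr h hab, if_congr (overdue_congr h) rfl rfl,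
    summaryOn_congr (h.mono (Set.Iio_subset_Iio hab)) hra]

theorem Accepting.not_frequently_stageColor_eq_odd (hw : M.Accepting q₀ w) (hcut : StrictMono cut)
    {reset : ℕ → ℕ} (hreset : ∀ i, reset i ≤ cut i)
    (hsucc : ∀ i, reset (i + 1) =
      if M.Overdue q₀ w (reset i) (cut (i + 1)) then cut (i + 1) else reset i)
    (hp : Odd p) (hle : ∀ i, M.stageColor q₀ w (reset i) (cut i) (cut (i + 1)) ≤ p) :
    ¬ ∃ᶠ i in atTop, M.stageColor q₀ w (reset i) (cut i) (cut (i + 1)) = p := by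
  intro hfreq
  obtain ⟨N, hN⟩ := eventually_atTop.1 (hw.eventually_not_overdue hcut hreset hsucc)
  have reset_const : ∀ i, reset (i + N) = reset N := fun i => by
    induction i with
    | zero => rw [zero_add]
    | succ i ih => rw [add_right_comm, hsucc, if_neg (hN _ (Nat.le_add_left _ _)), ih]
  have color_eq : ∀ i, M.stageColor q₀ w (reset (i + N)) (cut (i + N)) (cut (i + N + 1)) =
      (M.summaryOn q₀ w (cut (i + N)) (cut (i + 1 + N))).blockColor
        (M.summaryOn q₀ w (reset N) (cut (i + N))).request := fun i => by
    rw [stageColor, if_neg (hN _ (Nat.le_add_left _ _)), reset_const, add_right_comm]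
  rw [← map_add_atTop_eq_nat N, frequently_map] at hfreq
  have hcut' : StrictMono fun i => cut (i + N) := fun i j hij => hcut (Nat.add_lt_add_right hij N)
  obtain ⟨i, hi⟩ := overdue_of_frequently_blockColor (r := reset N) hw hcut'
    ((hreset N).trans_eq (by rw [zero_add])) hp (fun i => color_eq i ▸ hle (i + N))
    (hfreq.mono fun i hi => color_eq i ▸ hi)
  exact hN (i + N) (Nat.le_add_left _ _) (by rwa [reset_const, add_right_comm])

end TopColor

end PACost

end WordParity

section Histories

open Filter

variable {X : Type*}

theorem exists_eqOn_Iio_of_eqOn_succ {x : ℕ → ℕ → X} {c : ℕ → ℕ} (hc : StrictMono c)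
    (h : ∀ i, Set.EqOn (x (i + 1)) (x i) (Set.Iio (c i))) :
    ∃ y : ℕ → X, ∀ i, Set.EqOn (x i) y (Set.Iio (c i)) := by
  have agree : ∀ {i k}, i ≤ k → Set.EqOn (x k) (x i) (Set.Iio (c i)) := fun {i k} hik => by
    induction k, hik using Nat.le_induction with
    | base => exact fun _ _ => rfl
    | succ k hik ih =>
      exact ((h k).mono (Set.Iio_subset_Iio (hc.monotone hik))).trans ih
  refine ⟨fun j => x (j + 1) j, fun i j hj => ?_⟩
  rcases le_total i (j + 1) with hij | hij
  · exact (agree hij hj).symm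
  · exact agree hij (Set.mem_Iio.2 (j.lt_succ_self.trans_le hc.le_apply))

/-- The infinite word that agrees with `α` below position `c` and then continues with `u`. -/
def continueWith [Inhabited X] (α : ℕ → X) (c : ℕ) (u : List X) : ℕ → X :=
  fun j => if j < c then α j else u.getD (j - c) default

theorem eqOn_continueWith [Inhabited X] (α : ℕ → X) (c : ℕ) (u : List X) :
    Set.EqOn (continueWith α c u) α (Set.Iio c) :=
  fun _ hj => if_pos hj

theorem seg_continueWith {I : Type} [Inhabited I] (α : ℕ → I) (c : ℕ) (u : List I) :
    seg (continueWith α c u) c (c + u.length) = u := by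
  refine List.ext_getElem (by rw [length_seg, Nat.add_sub_cancel_left]) fun j hj hj' => ?_
  rw [getElem_seg, continueWith, if_neg (Nat.le_add_right c j).not_gt, Nat.add_sub_cancel_left,
    List.getD_eq_getElem _ _ hj']

namespace PACost

variable {Q I O : Type}

/-- A position in a play of the block game that is simulated in the delay game: Player I has
produced the word `input`, the current block is `(start, mid]`, the next block, which Player O
already knows, is `(mid, finish]`, and only requests raised after position `reset` are tracked. -/
structure History (I : Type) where
  input : ℕ → I
  start : ℕ
  mid : ℕ
  finish : ℕ
  reset : ℕ

namespace History

variable (M : PACost Q (I × O)) (f : ℕ → ℕ) (σ : List I → O)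

/-- Both blocks of a valid history are nonempty, and the second one is so long that a strategy with
delay `f` has produced the output on the first one. -/
structure Valid (t : History I) : Prop where
  start_lt_mid : t.start < t.mid
  mid_lt_finish : t.mid < t.finish
  seen : lettersBefore f t.mid ≤ t.finish
  reset_le_start : t.reset ≤ t.start

/-- The summary of the current block if Player O follows `σ`. -/
def blockSummary (t : History I) : Summary Q :=
  M.summaryOn M.qI (outcome f σ t.input) t.start t.mid

/-- The history `t` ends with an overdue request, so tracking restarts. -/
def Resets (t : History I) : Prop := M.Overdue M.qI (outcome f σ t.input) t.reset t.mid

/-- The position after which requests are tracked once the current block is completed. -/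
def nextReset (t : History I) : ℕ := if t.Resets M f σ then t.mid else t.reset

/-- One move of the block game: Player I adds a block. -/
structure Step (t t' : History I) : Prop where
  start_eq : t'.start = t.mid
  mid_eq : t'.mid = t.finish
  eqOn : Set.EqOn t'.input t.input (Set.Iio t.finish)
  reset_eq : t'.reset = t.nextReset M f σ

variable {M f σ} {t : History I}

theorem Valid.nextReset_le_mid (ht : t.Valid f) : t.nextReset M f σ ≤ t.mid := by
  rw [nextReset]
  split_ifs
  exacts [le_rfl, ht.reset_le_start.trans ht.start_lt_mid.le]

end History

/-- The abstraction of a history that the new strategy keeps in memory: the state and the open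
request at the start of the current block, and the profiles of the current and the next block. -/
structure Vertex (Q : Type) where
  state : Q
  request : ℕ
  current : Finset (Q × Summary Q)
  next : Finset (Q × Summary Q)

/-- The request that is tracked after a block with summary `s` that is entered with the open
request `o`, where `reset` says whether tracking restarts after the block. -/
def nextRequest (reset : Prop) (o : ℕ) (s : Summary Q) : ℕ := if reset then 0 else s.carry o

variable [Fintype Q]

/-- The finite set of all candidates for vertices. -/
def vertices (M : PACost Q (I × O)) : Finset (Vertex Q) :=
  (Finset.univ ×ˢ M.colors ×ˢ
    (Finset.univ ×ˢ M.summaries : Finset (Q × Summary Q)).powerset ×ˢ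
    (Finset.univ ×ˢ M.summaries : Finset (Q × Summary Q)).powerset).image fun x =>
      ⟨x.1, x.2.1, x.2.2.1, x.2.2.2⟩

theorem card_vertices_le (M : PACost Q (I × O)) :
    M.vertices.card ≤ Fintype.card Q * (M.colors.card *
      (2 ^ (Fintype.card Q * M.summaries.card) * 2 ^ (Fintype.card Q * M.summaries.card))) := by
  refine Finset.card_image_le.trans_eq ?_
  simp only [Finset.card_product, Finset.card_powerset, Finset.card_univ]

theorem request_mem_colors {M : PACost Q (I × O)} {v : Vertex Q} (hv : v ∈ M.vertices) :
    v.request ∈ M.colors := by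
  obtain ⟨x, hx, rfl⟩ := Finset.mem_image.1 hv
  exact (Finset.mem_product.1 (Finset.mem_product.1 hx).2).1

namespace History

variable (M : PACost Q (I × O)) (f : ℕ → ℕ) (σ : List I → O)

/-- The vertex that a history in which Player O follows `σ` is abstracted to. -/
def vertex (t : History I) : Vertex Q where
  state := M.stateAt M.qI (outcome f σ t.input) t.start
  request := (M.summaryOn M.qI (outcome f σ t.input) t.reset t.start).request
  current := M.profile (seg t.input t.start t.mid)
  next := M.profile (seg t.input t.mid t.finish)

/-- The color of the current block of the history. -/
def color (t : History I) : ℕ :=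
  M.stageColor M.qI (outcome f σ t.input) t.reset t.start t.mid

variable {M f σ} {t : History I}

theorem vertex_mem_vertices : t.vertex M f σ ∈ M.vertices := by
  refine Finset.mem_image.2 ⟨(_, _, _, _), ?_, rfl⟩
  simp only [Finset.mem_product, Finset.mem_univ, true_and]
  exact ⟨(mem_summaries.1 (M.summary_mem_summaries _ _)).2, M.profile_mem_powerset _,
    M.profile_mem_powerset _⟩

theorem blockSummary_mem_current :
    ((t.vertex M f σ).state, t.blockSummary M f σ) ∈ (t.vertex M f σ).current :=
  summaryOn_mem_profile _ _ _ _

theorem color_eq : t.color M f σ = if t.Resets M f σ then M.topColor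
    else (t.blockSummary M f σ).blockColor (t.vertex M f σ).request := rfl

theorem color_le_topColor : t.color M f σ ≤ M.topColor := by
  rw [color, stageColor]
  split_ifs
  · exact le_rfl
  · exact le_topColor (blockColor_mem_colors (M.summary_mem_summaries _ _)
      (mem_summaries.1 (M.summary_mem_summaries _ _)).2)

theorem Valid.request_nextReset (ht : t.Valid f) {w : ℕ → I × O}
    (hw : Set.EqOn w (outcome f σ t.input) (Set.Iio t.mid)) :
    (M.summaryOn M.qI w (t.nextReset M f σ) t.mid).request =
      nextRequest (t.Resets M f σ) (t.vertex M f σ).request (t.blockSummary M f σ) := by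
  rw [summaryOn_congr hw ht.nextReset_le_mid, nextReset, nextRequest]
  split_ifs
  · rw [summaryOn_self]
  · rw [summaryOn_trans ht.reset_le_start ht.start_lt_mid.le]
    rfl

theorem Valid.exists_step [Inhabited I] (hf : DelayFn f) (ht : t.Valid f)
    {C : Finset (Q × Summary Q)} (hC : M.Pumpable C) :
    ∃ t' : History I, t'.Valid f ∧ t.Step M f σ t' ∧ t'.vertex M f σ =
      { state := (t.blockSummary M f σ).state
        request := nextRequest (t.Resets M f σ) (t.vertex M f σ).request (t.blockSummary M f σ)
        current := (t.vertex M f σ).next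
        next := C } := by
  obtain ⟨u, hu, rfl⟩ := hC (lettersBefore f t.finish + 1)
  let t' : History I := ⟨continueWith t.input t.finish u, t.mid, t.finish, t.finish + u.length,
    t.nextReset M f σ⟩
  have hinput : Set.EqOn t'.input t.input (Set.Iio t.finish) := eqOn_continueWith _ _ _
  have houtcome := hf.outcome_congr σ ht.seen hinput
  have hcurrent : seg t'.input t.mid t.finish = seg t.input t.mid t.finish := seg_congr hinput _
  have hnext : seg t'.input t.finish (t.finish + u.length) = u := seg_continueWith _ _ _
  refine ⟨t', ⟨ht.mid_lt_finish, ?_, ?_, ht.nextReset_le_mid⟩, ⟨rfl, rfl, hinput, rfl⟩, ?_⟩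
  · change t.finish < t.finish + u.length
    omega
  · change lettersBefore f t.finish ≤ t.finish + u.length
    omega
  · simp only [vertex, Vertex.mk.injEq]
    refine ⟨?_, ht.request_nextReset houtcome, congrArg M.profile hcurrent,
      congrArg M.profile hnext⟩
    rw [blockSummary, state_summaryOn ht.start_lt_mid.le]
    exact stateAt_congr houtcome (Set.mem_Iic.2 le_rfl)

theorem exists_initial [Inhabited I] {C C' : Finset (Q × Summary Q)} (hC : M.Pumpable C)
    (hC' : M.Pumpable C') : ∃ t : History I, t.Valid f ∧ t.vertex M f σ = ⟨M.qI, 0, C, C'⟩ := by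
  obtain ⟨u, hu, rfl⟩ := hC 1
  obtain ⟨u', hu', rfl⟩ := hC' (lettersBefore f u.length + 1)
  let α : ℕ → I := continueWith (fun _ => default) 0 u
  let β : ℕ → I := continueWith α u.length u'
  have hcurrent : seg β 0 u.length = u := by
    have := seg_continueWith (fun _ => default) 0 u
    rw [zero_add] at this
    rw [seg_congr (eqOn_continueWith α u.length u'), this]
  have hnext : seg β u.length (u.length + u'.length) = u' := seg_continueWith _ _ _
  refine ⟨⟨β, 0, u.length, u.length + u'.length, 0⟩,
    ⟨hu, Nat.lt_add_of_pos_right (Nat.zero_lt_of_lt hu'), ?_, le_rfl⟩, ?_⟩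
  · change lettersBefore f u.length ≤ u.length + u'.length
    omega
  · simp only [vertex, hcurrent, hnext, summaryOn_self, stateAt]

theorem noOddPath [Inhabited I] (hf : DelayFn f) (hσ : OWinning f M.Lang σ) :
    NoOddPath (fun t t' : {t : History I // t.Valid f} => t.1.Step M f σ t'.1)
      (fun t => t.1.color M f σ) := by
  intro t hstep p hp hle hfreq
  have start_succ : ∀ i, (t (i + 1)).1.start = (t i).1.mid := fun i => (hstep i).start_eq
  have hcut : StrictMono fun i => (t i).1.start := strictMono_nat_of_lt_succ fun i => by
    rw [start_succ]
    exact (t i).2.start_lt_mid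
  have hfinish : StrictMono fun i => (t i).1.finish := strictMono_nat_of_lt_succ fun i => by
    rw [← (hstep i).mid_eq]
    exact (t (i + 1)).2.mid_lt_finish
  obtain ⟨α, hα⟩ :=
    exists_eqOn_Iio_of_eqOn_succ (x := fun i => (t i).1.input) hfinish fun i => (hstep i).eqOn
  have houtcome : ∀ i, Set.EqOn (outcome f σ (t i).1.input) (outcome f σ α)
      (Set.Iio (t (i + 1)).1.start) := fun i => by
    rw [start_succ]
    exact hf.outcome_congr σ (t i).2.seen (hα i)
  have hcolor : ∀ i, (t i).1.color M f σ = M.stageColor M.qI (outcome f σ α) (t i).1.reset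
      (t i).1.start (t (i + 1)).1.start := fun i => by
    rw [← stageColor_congr (houtcome i) (t i).2.reset_le_start (hcut i.lt_succ_self).le,
      start_succ, color]
  have accepting : M.Accepting M.qI (outcome f σ α) := hf.oWinning_iff.1 hσ α
  refine accepting.not_frequently_stageColor_eq_odd hcut (reset := fun i => (t i).1.reset)
    (fun i => (t i).2.reset_le_start) (fun i => ?_) hp (fun i => hcolor i ▸ hle i)
    (hfreq.mono fun i hi => hcolor i ▸ hi)
  rw [(hstep i).reset_eq, nextReset, Resets, ← start_succ]
  exact if_congr (overdue_congr (houtcome i)) rfl rfl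

end History

end PACost

end Histories

section BlockStrategies

namespace PACost

/-- A strategy for Player O in the block game with the vertices as memory: at a vertex it fixes
the summary of the run on the current block and whether tracking of requests restarts after it. -/
structure BlockStrategy (Q : Type) where
  answer : Vertex Q → Summary Q
  resets : Vertex Q → Prop

variable {Q I O : Type} {M : PACost Q (I × O)}

namespace BlockStrategy

/-- The vertices visited if Player I's blocks have the profiles `C 0, C 1, …`. -/
def play (M : PACost Q (I × O)) (B : BlockStrategy Q) (C : ℕ → Finset (Q × Summary Q)) :
    ℕ → Vertex Q
  | 0 => ⟨M.qI, 0, C 0, C 1⟩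
  | x + 1 =>
    let v := play M B C x
    ⟨(B.answer v).state, nextRequest (B.resets v) v.request (B.answer v), C (x + 1), C (x + 2)⟩

theorem current_play (B : BlockStrategy Q) (C : ℕ → Finset (Q × Summary Q)) (x : ℕ) :
    (B.play M C x).current = C x := by
  cases x <;> rfl

theorem next_play (B : BlockStrategy Q) (C : ℕ → Finset (Q × Summary Q)) (x : ℕ) :
    (B.play M C x).next = C (x + 1) := by
  cases x <;> rfl

theorem play_congr (B : BlockStrategy Q) {C C' : ℕ → Finset (Q × Summary Q)} {x : ℕ}
    (h : Set.EqOn C C' (Set.Iic (x + 1))) : B.play M C x = B.play M C' x := by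
  induction x with
  | zero => rw [play, play, h (Set.mem_Iic.2 zero_le_one), h (Set.mem_Iic.2 le_rfl)]
  | succ x ih =>
    rw [play, play, ih (h.mono (Set.Iic_subset_Iic.2 (x + 1).le_succ)),
      h (Set.mem_Iic.2 (x + 1).le_succ), h (Set.mem_Iic.2 le_rfl)]

variable [Fintype Q]

/-- The color of a vertex from which Player O moves according to `B`. -/
def color (M : PACost Q (I × O)) (B : BlockStrategy Q) (v : Vertex Q) : ℕ :=
  if B.resets v then M.topColor else (B.answer v).blockColor v.request

/-- Against blocks with pumpable profiles, `B` always moves to a summary in the current profile, and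
the largest color on every cycle of a play is even. -/
structure Winning (M : PACost Q (I × O)) (B : BlockStrategy Q) : Prop where
  mem_vertices : ∀ C : ℕ → Finset (Q × Summary Q), (∀ x, M.Pumpable (C x)) → ∀ x,
    B.play M C x ∈ M.vertices
  answer_mem : ∀ C : ℕ → Finset (Q × Summary Q), (∀ x, M.Pumpable (C x)) → ∀ x,
    ((B.play M C x).state, B.answer (B.play M C x)) ∈ C x
  even_cycle : ∀ C : ℕ → Finset (Q × Summary Q), (∀ x, M.Pumpable (C x)) → ∀ i j, i < j →
    B.play M C i = B.play M C j →
    Even ((Finset.Ico i j).sup fun x => B.color M (B.play M C x))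

theorem exists_winning [Inhabited I] {f : ℕ → ℕ} (hf : DelayFn f) {σ : List I → O}
    (hσ : OWinning f M.Lang σ) : ∃ B : BlockStrategy Q, B.Winning M := by
  obtain ⟨C₀, hC₀⟩ : ∃ C, M.Pumpable C := ⟨_, pumpable_profile (M := M)
    (w := List.replicate _ default) (by rw [List.length_replicate])⟩
  obtain ⟨t₀, ht₀, -⟩ := History.exists_initial (f := f) (σ := σ) hC₀ hC₀
  have : Nonempty {t : History I // t.Valid f} := ⟨⟨t₀, ht₀⟩⟩
  obtain ⟨sel, sel_vertex, even_cycle⟩ := (History.noOddPath hf hσ).exists_section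
    (fun _ => History.color_le_topColor) fun t => t.1.vertex M f σ
  let B : BlockStrategy Q :=
    ⟨fun v => (sel v).1.blockSummary M f σ, fun v => (sel v).1.Resets M f σ⟩
  have step : ∀ C : ℕ → Finset (Q × Summary Q), (∀ x, M.Pumpable (C x)) → ∀ x,
      (sel (B.play M C x)).1.vertex M f σ = B.play M C x →
      ∃ t' : {t : History I // t.Valid f}, (sel (B.play M C x)).1.Step M f σ t'.1 ∧
        t'.1.vertex M f σ = B.play M C (x + 1) := fun C hC x hx => by
    obtain ⟨t', ht', hstep, hvertex⟩ := (sel (B.play M C x)).2.exists_step (σ := σ) hf (hC (x + 2))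
    refine ⟨⟨t', ht'⟩, hstep, hvertex.trans ?_⟩
    rw [hx, next_play]
    rfl
  have vertex_sel : ∀ C : ℕ → Finset (Q × Summary Q), (∀ x, M.Pumpable (C x)) → ∀ x,
      (sel (B.play M C x)).1.vertex M f σ = B.play M C x := fun C hC x => by
    induction x with
    | zero =>
      obtain ⟨t, ht, hvertex⟩ := History.exists_initial (f := f) (σ := σ) (hC 0) (hC 1)
      exact (show t.vertex M f σ = B.play M C 0 from hvertex) ▸ sel_vertex ⟨t, ht⟩
    | succ x ih =>
      obtain ⟨t, -, hvertex⟩ := step C hC x ih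
      exact hvertex ▸ sel_vertex t
  refine ⟨B, fun C hC x => ?_, fun C hC x => ?_, fun C hC i j hij heq => ?_⟩
  · exact vertex_sel C hC x ▸ History.vertex_mem_vertices
  · have := History.blockSummary_mem_current (M := M) (f := f) (σ := σ)
      (t := (sel (B.play M C x)).1)
    rwa [vertex_sel C hC x, current_play] at this
  · have := even_cycle _ (fun x => step C hC x (vertex_sel C hC x)) i j hij heq
    simp only [History.color_eq, vertex_sel C hC] at this
    exact this

end BlockStrategy

end PACost

end BlockStrategies

section CostBound

open Filter

theorem exists_eventually_le_frequently_eq {κ : ℕ → ℕ} {D : ℕ} (h : ∀ x, κ x ≤ D) :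
    ∃ p, (∀ᶠ x in atTop, κ x ≤ p) ∧ ∃ᶠ x in atTop, κ x = p := by
  have bounded : ∃ p, ∀ᶠ x in atTop, κ x ≤ p := ⟨D, .of_forall h⟩
  refine ⟨Nat.find bounded, Nat.find_spec bounded, fun hne => ?_⟩
  have hlt : ∀ᶠ x in atTop, κ x < Nat.find bounded :=
    ((Nat.find_spec bounded).and hne).mono fun x hx => lt_of_le_of_ne hx.1 hx.2
  obtain ⟨x, hx⟩ := hlt.exists
  exact Nat.find_min bounded (Nat.sub_one_lt_of_lt hx) (hlt.mono fun _ => Nat.le_sub_one_of_lt)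

theorem even_of_eventually_le_of_frequently_eq {V : Type*} {v : ℕ → V} {S : Finset V}
    (hv : ∀ x, v x ∈ S) {κ : ℕ → ℕ}
    (heven : ∀ i j, i < j → v i = v j → Even ((Finset.Ico i j).sup κ)) {p : ℕ}
    (hle : ∀ᶠ x in atTop, κ x ≤ p) (hfreq : ∃ᶠ x in atTop, κ x = p) : Even p := by
  obtain ⟨x₀, hx₀⟩ := eventually_atTop.1 hle
  have hinf : {x | κ x = p ∧ x₀ ≤ x}.Infinite :=
    Nat.frequently_atTop_iff_infinite.1 (hfreq.and_eventually (eventually_ge_atTop x₀))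
  obtain ⟨i, hi, j, hj, hne, heq⟩ := hinf.exists_ne_map_eq_of_mapsTo
    (fun x _ => Finset.mem_coe.2 (hv x)) S.finite_toSet
  wlog hij : i < j generalizing i j
  · exact this j hj i hi hne.symm heq.symm (hne.lt_or_gt.resolve_left hij)
  have hsup : (Finset.Ico i j).sup κ = p := le_antisymm
    (Finset.sup_le fun l hl => hx₀ l (hi.2.trans (Finset.mem_Ico.1 hl).1))
    (hi.1.ge.trans (Finset.le_sup (Finset.left_mem_Ico.2 hij)))
  exact hsup ▸ heven i j hij heq

namespace PACost

variable {Q A : Type}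

namespace Summary

variable {o c : ℕ} {s : Summary Q}

theorem odd_carry (ho : o ≠ 0 → Odd o) (hs : s.request ≠ 0 → Odd s.request) :
    s.carry o ≠ 0 → Odd (s.carry o) := by
  rw [carry]
  refine max_rec' (fun x => x ≠ 0 → Odd x) ?_ hs
  split_ifs
  exacts [fun h => (h rfl).elim, ho]

theorem odd_blockColor (ho : o ≠ 0 → Odd o) (hs : s.request ≠ 0 → Odd s.request)
    (h : s.answer < s.blockColor o) : Odd (s.blockColor o) := by
  have hcases : s.blockColor o = s.request ∨ s.blockColor o = o := by
    rw [blockColor] at h ⊢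
    split_ifs at h ⊢ <;> omega
  have hne : s.blockColor o ≠ 0 := Nat.ne_zero_of_lt h
  rcases hcases with heq | heq <;> rw [heq] at hne ⊢
  exacts [hs hne, ho hne]

theorem le_carry (hs : s.answer ≤ c) (hc : c ≤ o) : c ≤ s.carry o := by
  rw [carry, if_neg (hs.trans hc).not_gt]
  exact hc.trans (le_max_left _ _)

theorem exists_first_answer {s : ℕ → Summary Q} {o : ℕ → ℕ} {x : ℕ}
    (hcarry : ∀ l, x ≤ l → o (l + 1) = (s l).carry (o l)) (hx : c ≤ (s x).request)
    (h : ∃ y, x < y ∧ c < (s y).answer) :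
    ∃ y, x < y ∧ c < (s y).answer ∧ ∀ l, x < l → l < y → (s l).answer ≤ c ∧ c ≤ o l := by
  obtain ⟨hxy, hy⟩ := Nat.find_spec h
  have answer_le : ∀ l, x < l → l < Nat.find h → (s l).answer ≤ c := fun l hxl hly =>
    not_lt.1 fun hlt => Nat.find_min h hly ⟨hxl, hlt⟩
  refine ⟨Nat.find h, hxy, hy, fun l hxl hly => ⟨answer_le l hxl hly, ?_⟩⟩
  induction l, (Nat.succ_le_of_lt hxl) using Nat.le_induction with
  | base =>
    rw [hcarry x le_rfl]
    exact hx.trans (le_max_right _ _)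
  | succ l hl ih =>
    have hly' := l.lt_succ_self.trans hly
    rw [hcarry l (Nat.le_of_succ_le hl)]
    exact le_carry (answer_le l hl hly') (ih hl hly')

end Summary

/-- The summary of the `x`-th block of length `d` of the run on `w` from `q₀`. -/
def nthSummary (M : PACost Q A) (q₀ : Q) (w : ℕ → A) (d x : ℕ) : Summary Q :=
  M.summaryOn q₀ w (x * d) ((x + 1) * d)

variable {M : PACost Q A} {q₀ : Q} {w : ℕ → A} {d x y c p : ℕ} {o : ℕ → ℕ}

theorem block_start_le_end (d x : ℕ) : x * d ≤ (x + 1) * d := Nat.mul_le_mul_right d x.le_succ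

theorem segCost_blocks_le (hxy : x ≤ y) : M.segCost q₀ w (x * d) (y * d) ≤
    ((Finset.Ico x y).filter fun l => (M.nthSummary q₀ w d l).incr = true).card * d := by
  induction y, hxy using Nat.le_induction with
  | base => exact (segCost_self _).trans_le (Nat.zero_le _)
  | succ y hxy ih =>
    rw [segCost_add (Nat.mul_le_mul_right d hxy) (block_start_le_end d y),
      ← Finset.insert_Ico_right_eq_Ico_add_one hxy, Finset.filter_insert]
    split_ifs with hincr
    · rw [Finset.card_insert_of_notMem (by simp)]
      refine (Nat.add_le_add ih ((segCost_le _ _).trans_eq ?_)).trans_eq (Nat.succ_mul _ d).symm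
      rw [Nat.succ_mul, Nat.add_sub_cancel_left]
    · have free : M.segCost q₀ w (y * d) ((y + 1) * d) = 0 := Nat.eq_zero_of_not_pos fun hpos =>
        hincr ((incr_summaryOn_iff (block_start_le_end d y)).2 hpos)
      rwa [free, add_zero]

theorem card_incr_blocks_le {V : Type*} {v : ℕ → V} {S : Finset V} (hv : ∀ l, v l ∈ S)
    {κ : ℕ → ℕ} (heven : ∀ i j, i < j → v i = v j → Even ((Finset.Ico i j).sup κ))
    (hκ : ∀ l, x < l → l < y → κ l = (M.nthSummary q₀ w d l).blockColor (o l))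
    (ho : ∀ l, o l ≠ 0 → Odd (o l)) (hc : Odd c)
    (hopen : ∀ l, x < l → l < y → (M.nthSummary q₀ w d l).answer ≤ c ∧ c ≤ o l) :
    ((Finset.Ico (x + 1) y).filter fun l => (M.nthSummary q₀ w d l).incr = true).card ≤
      S.card := by
  refine Finset.card_le_card_of_injOn v (fun l _ => hv l) fun i hi j hj heq => ?_
  by_contra hne
  wlog hij : i < j generalizing i j
  · exact this j hj i hi heq.symm (Ne.symm hne) ((lt_or_gt_of_ne hne).resolve_left hij)
  simp only [Finset.coe_filter, Finset.mem_Ico, Nat.succ_le_iff, Set.mem_ofPred_eq] at hi hj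
  obtain ⟨l, hl, hsup⟩ := Finset.exists_mem_eq_sup _ (Finset.nonempty_Ico.2 hij) κ
  obtain ⟨hil, hlj⟩ := Finset.mem_Ico.1 hl
  have hxl := hi.1.1.trans_le hil
  have hly := hlj.trans hj.1.2
  have c_le : c ≤ κ l := calc
    c ≤ o i := (hopen i hi.1.1 hi.1.2).2
    _ ≤ κ i := by
      rw [hκ i hi.1.1 hi.1.2, Summary.blockColor, if_pos hi.2]
      exact le_max_right _ _
    _ ≤ κ l := hsup ▸ Finset.le_sup (Finset.left_mem_Ico.2 hij)
  have answer_lt : (M.nthSummary q₀ w d l).answer < c := (hopen l hxl hly).1.lt_of_ne fun h =>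
    Nat.not_even_iff_odd.2 hc (h ▸ even_answer (block_start_le_end d l))
  rw [hκ l hxl hly] at c_le hsup
  exact Nat.not_even_iff_odd.2 (Summary.odd_blockColor (ho l)
    (odd_request (block_start_le_end d l)) (answer_lt.trans_le c_le)) (hsup ▸ heven i j hij heq)

theorem cor_le_of_answer {m k : ℕ} (hm : m ≤ (x + 1) * d) (hxm : x * d < m) (hxy : x < y)
    (hcost : M.segCost q₀ w ((x + 1) * d) (y * d) ≤ k * d)
    (hy : M.color q₀ w m < (M.nthSummary q₀ w d y).answer) :
    M.Cor q₀ w m ≤ ((k + 2) * d : ℕ) := by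
  obtain ⟨n, hyn, hny, hn⟩ :=
    exists_color_eq_answer (block_start_le_end d y) (Nat.ne_zero_of_lt hy)
  have heven : Even (M.color q₀ w n) := hn ▸ even_answer (block_start_le_end d y)
  have hxyd : (x + 1) * d ≤ y * d := Nat.mul_le_mul_right d hxy
  refine (cor_le_segCost ((hm.trans hxyd).trans_lt hyn) heven (hn ▸ hy)).trans ?_
  have before := segCost_le (M := M) (q₀ := q₀) (w := w) m ((x + 1) * d)
  have after := segCost_le (M := M) (q₀ := q₀) (w := w) (y * d) n
  rw [segCost_add hm (hxyd.trans hyn.le), segCost_add hxyd hyn.le]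
  have hx := add_one_mul x d
  have hy' := add_one_mul y d
  have hk := add_mul k 2 d
  norm_cast
  omega

theorem cor_le_of_blockColor {V : Type*} {v : ℕ → V} {S : Finset V} (hv : ∀ l, v l ∈ S)
    {κ : ℕ → ℕ} (heven : ∀ i j, i < j → v i = v j → Even ((Finset.Ico i j).sup κ))
    (hκ : ∀ l, x ≤ l → κ l = (M.nthSummary q₀ w d l).blockColor (o l))
    (ho : ∀ l, o l ≠ 0 → Odd (o l))
    (hcarry : ∀ l, x ≤ l → o (l + 1) = (M.nthSummary q₀ w d l).carry (o l))
    (hp : Even p) (hle : ∀ l, x ≤ l → κ l ≤ p) (hfreq : ∃ᶠ l in atTop, κ l = p) {m : ℕ}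
    (hxm : x * d < m) (hm : m ≤ (x + 1) * d) : M.Cor q₀ w m ≤ ((S.card + 2) * d : ℕ) := by
  by_cases hcolor : Even (M.color q₀ w m)
  · exact (if_pos hcolor).trans_le bot_le
  have hodd := Nat.not_even_iff_odd.1 hcolor
  by_cases hopen : M.OpenUntil q₀ w m ((x + 1) * d)
  · have hrequest : M.color q₀ w m ≤ (M.nthSummary q₀ w d x).request :=
      hopen.color_le_request hxm hm
    have hlt : M.color q₀ w m < p := by
      refine lt_of_le_of_ne ?_ fun h => hcolor (h ▸ hp)
      refine hrequest.trans (le_trans ?_ (hle x le_rfl))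
      rw [hκ x le_rfl]
      exact (le_max_right _ _).trans (le_max_left _ _)
    have answered : ∃ y, x < y ∧ M.color q₀ w m < (M.nthSummary q₀ w d y).answer := by
      obtain ⟨y, hxy, hy⟩ := frequently_atTop.1 hfreq (x + 1)
      refine ⟨y, hxy, hlt.trans_le (not_lt.1 fun hans => ?_)⟩
      rw [hκ y (Nat.le_of_succ_le hxy)] at hy
      exact Nat.not_even_iff_odd.2 (Summary.odd_blockColor (ho y)
        (odd_request (block_start_le_end d y)) (hans.trans_eq hy.symm)) (hy ▸ hp)
    obtain ⟨y, hxy, hy, hbetween⟩ := Summary.exists_first_answer hcarry hrequest answered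
    refine cor_le_of_answer hm hxm hxy ((segCost_blocks_le hxy).trans (Nat.mul_le_mul_right d ?_))
      hy
    exact card_incr_blocks_le hv heven (fun l hl _ => hκ l hl.le) ho hodd hbetween
  · simp only [OpenUntil, hodd, true_and, not_forall, not_le] at hopen
    obtain ⟨n, hmn, hn, hneven, hlt⟩ := hopen
    refine (cor_le_segCost hmn hneven hlt).trans (Nat.cast_le.2 ((segCost_le _ _).trans ?_))
    rw [Nat.succ_mul] at hn
    rw [add_mul]
    omega

end PACost

namespace PACost.BlockStrategy

variable {Q I O : Type} {M : PACost Q (I × O)} {B : BlockStrategy Q}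
  {C : ℕ → Finset (Q × Summary Q)}

theorem odd_request_play
    (h : ∀ x, (B.answer (B.play M C x)).request ≠ 0 → Odd (B.answer (B.play M C x)).request)
    (x : ℕ) : (B.play M C x).request ≠ 0 → Odd (B.play M C x).request := by
  induction x with
  | zero => exact fun h => (h rfl).elim
  | succ x ih =>
    simp only [play, nextRequest]
    split_ifs
    · exact fun h => (h rfl).elim
    · exact Summary.odd_carry ih (h x)

variable [Fintype Q]

theorem color_le_topColor {v : Vertex Q} (hv : v ∈ M.vertices) (hB : B.answer v ∈ M.summaries) :
    B.color M v ≤ M.topColor := by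
  rw [color]
  split_ifs
  · exact le_rfl
  · exact le_topColor (blockColor_mem_colors hB (request_mem_colors hv))

theorem Winning.wCost_le (hB : B.Winning M) (hC : ∀ x, M.Pumpable (C x)) {w : ℕ → I × O} {d : ℕ}
    (hd : 0 < d) (hw : ∀ x, B.answer (B.play M C x) = M.nthSummary M.qI w d x) :
    M.wCost w ≤ ((M.vertices.card + 2) * d : ℕ) := by
  have hbound : ∀ x, B.color M (B.play M C x) ≤ M.topColor := fun x =>
    color_le_topColor (hB.mem_vertices C hC x) (hw x ▸ M.summary_mem_summaries _ _)
  obtain ⟨p, hle, hfreq⟩ := exists_eventually_le_frequently_eq hbound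
  have hp : Even p :=
    even_of_eventually_le_of_frequently_eq (hB.mem_vertices C hC) (hB.even_cycle C hC) hle hfreq
  have hlt : p < M.topColor := by
    obtain ⟨x, hx⟩ := hfreq.exists
    refine (hx ▸ hbound x).lt_of_ne fun h => ?_
    exact Nat.not_even_iff_odd.2 ⟨_, rfl⟩ (h ▸ hp)
  obtain ⟨x₀, hx₀⟩ := eventually_atTop.1 hle
  have no_reset : ∀ x, x₀ ≤ x → ¬ B.resets (B.play M C x) := fun x hx hreset => by
    have := hx₀ x hx
    rw [color, if_pos hreset] at this
    exact hlt.not_ge this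
  have ho := B.odd_request_play (M := M) (C := C) fun x => by
    rw [hw]
    exact odd_request (block_start_le_end d x)
  refine limsup_le_of_le (by isBoundedDefault) (eventually_atTop.2 ⟨x₀ * d + 1, fun m hm => ?_⟩)
  obtain ⟨x, hx, hxm, hmx⟩ := exists_mem_Ioc_of_strictMono (A := fun x => x * d)
    (fun _ _ h => Nat.mul_lt_mul_of_pos_right h hd) (Nat.lt_of_succ_le hm)
  refine cor_le_of_blockColor (hB.mem_vertices C hC) (hB.even_cycle C hC) (fun l hl => ?_) ho
    (fun l hl => ?_) hp (fun l hl => hx₀ l (hx.trans hl)) hfreq hxm hmx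
  · rw [color, if_neg (no_reset l (hx.trans hl)), hw]
  · rw [play, nextRequest, if_neg (no_reset l (hx.trans hl)), hw]

end PACost.BlockStrategy

end CostBound

section Strategies

variable {A I O Q : Type}

/-- The concatenation of the words `z 0, z 1, …`, all of which are meant to have length `d`. -/
def concatBlocks [Nonempty A] (d : ℕ) (z : ℕ → List A) (n : ℕ) : A :=
  (z (n / d)).getD (n % d) (Classical.arbitrary A)

theorem seg_concatBlocks [Nonempty A] {d : ℕ} {z : ℕ → List A} (hz : ∀ x, (z x).length = d)
    (x : ℕ) : seg (concatBlocks d z) (x * d) ((x + 1) * d) = z x := by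
  have hlen : (seg (concatBlocks d z) (x * d) ((x + 1) * d)).length = d := by
    rw [length_seg, add_one_mul, Nat.add_sub_cancel_left]
  refine List.ext_getElem (hlen.trans (hz x).symm) fun j hj hj' => ?_
  rw [hlen] at hj
  rw [getElem_seg, concatBlocks, mul_comm, Nat.mul_add_div (Nat.zero_lt_of_lt hj),
    Nat.div_eq_of_lt hj, add_zero, Nat.mul_add_mod, Nat.mod_eq_of_lt hj,
    List.getD_eq_getElem _ _ hj']

theorem eq_of_forall_seg_block_eq {w w' : ℕ → A} {d : ℕ} (hd : 0 < d)
    (h : ∀ x, seg w (x * d) ((x + 1) * d) = seg w' (x * d) ((x + 1) * d)) : w = w' := by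
  funext n
  have hn : n % d < (seg w (n / d * d) ((n / d + 1) * d)).length := by
    rw [length_seg, add_one_mul, Nat.add_sub_cancel_left]
    exact Nat.mod_lt n hd
  have := List.getElem_of_eq (h (n / d)) hn
  rwa [getElem_seg, getElem_seg, Nat.div_add_mod'] at this

theorem exists_outcome_eq_of_causal [Inhabited I] {m : ℕ} {g : (ℕ → I) → ℕ → I × O}
    (hfst : ∀ α n, (g α n).1 = α n)
    (hcausal : ∀ α α' n, Set.EqOn α α' (Set.Iio (m + n)) → g α n = g α' n) :
    ∃ τ : List I → O, ∀ α, outcome (fun i => if i = 0 then m else 1) τ α = g α := by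
  refine ⟨fun h => (g (fun j => h.getD j default) (h.length - m)).2, fun α => funext fun n => ?_⟩
  rw [outcome, lettersBefore_constant, length_seg, Nat.sub_zero, Nat.add_sub_cancel_left,
    hcausal _ α n fun j hj => ?_]
  · exact Prod.ext (hfst α n).symm rfl
  · have hj' : j < (seg α 0 (m + n)).length := by
      rw [length_seg]
      exact hj
    rw [List.getD_eq_getElem _ _ hj', getElem_seg, zero_add]

theorem exists_outcome_blocks_eq_of_causal [Inhabited I] [Nonempty O] {d : ℕ} (hd : 0 < d)
    {z : (ℕ → I) → ℕ → List (I × O)}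
    (hfst : ∀ α x, (z α x).map Prod.fst = seg α (x * d) ((x + 1) * d))
    (hcausal : ∀ α α' x, Set.EqOn α α' (Set.Iio ((x + 2) * d)) → z α x = z α' x) :
    ∃ τ : List I → O, ∀ α x,
      seg (outcome (fun i => if i = 0 then 2 * d else 1) τ α) (x * d) ((x + 1) * d) = z α x := by
  have hlen : ∀ α x, (z α x).length = d := fun α x => by
    rw [← List.length_map Prod.fst, hfst, length_seg, add_one_mul, Nat.add_sub_cancel_left]
  have fst_concat : ∀ α n, (concatBlocks d (z α) n).1 = α n := fun α =>
    congrFun <| eq_of_forall_seg_block_eq (w := Prod.fst ∘ concatBlocks d (z α)) hd fun x => by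
      rw [← map_seg, seg_concatBlocks (hlen α), hfst]
  have concat_congr : ∀ α α' n, Set.EqOn α α' (Set.Iio (2 * d + n)) →
      concatBlocks d (z α) n = concatBlocks d (z α') n := fun α α' n h => by
    have known : (n / d + 2) * d ≤ 2 * d + n := by
      rw [add_mul, add_comm]
      exact Nat.add_le_add_left (Nat.div_mul_le_self n d) _
    rw [concatBlocks, concatBlocks, hcausal α α' (n / d) (h.mono (Set.Iio_subset_Iio known))]
  obtain ⟨τ, hτ⟩ := exists_outcome_eq_of_causal fst_concat concat_congr
  exact ⟨τ, fun α x => hτ α ▸ seg_concatBlocks (hlen α) x⟩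

namespace PACost.BlockStrategy

variable {M : PACost Q (I × O)} {B : BlockStrategy Q}

theorem answer_play_eq_nthSummary {C : ℕ → Finset (Q × Summary Q)} {w : ℕ → I × O} {d : ℕ}
    (h : ∀ x, M.summary (B.play M C x).state (seg w (x * d) ((x + 1) * d)) =
      B.answer (B.play M C x)) (x : ℕ) :
    B.answer (B.play M C x) = M.nthSummary M.qI w d x := by
  have state_play : ∀ x, (B.play M C x).state = M.stateAt M.qI w (x * d) := fun x => by
    induction x with
    | zero =>
      rw [Nat.zero_mul]
      rfl
    | succ x ih =>
      rw [← state_summaryOn (block_start_le_end d x), summaryOn, ← ih, h x]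
      rfl
  rw [nthSummary, summaryOn, ← state_play, h]

theorem Winning.exists_wCost_le [Fintype Q] [Inhabited I] [Nonempty O] (hB : B.Winning M) {d : ℕ}
    (hd : 2 ^ (Finset.univ ×ˢ M.summaries : Finset (Q × Summary Q)).card ≤ d) :
    ∃ τ : List I → O, ∀ α, M.wCost (outcome (fun i => if i = 0 then 2 * d else 1) τ α) ≤
      ((M.vertices.card + 2) * d : ℕ) := by
  let C (α : ℕ → I) (x : ℕ) := M.profile (seg α (x * d) ((x + 1) * d))
  have hC : ∀ α x, M.Pumpable (C α x) := fun α x => pumpable_profile <| by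
    rwa [length_seg, add_one_mul, Nat.add_sub_cancel_left]
  have hpos : 0 < d := (Nat.two_pow_pos _).trans_le hd
  choose! z hfst hsummary using fun (u : List I) (q : Q) (s : Summary Q) =>
    (mem_profile (M := M) (w := u) (q := q) (s := s)).1
  have answer_mem := fun α => hB.answer_mem (C α) (hC α)
  let answerBlock (α : ℕ → I) (x : ℕ) := z (seg α (x * d) ((x + 1) * d))
    (B.play M (C α) x).state (B.answer (B.play M (C α) x))
  have answerBlock_congr : ∀ α α' x, Set.EqOn α α' (Set.Iio ((x + 2) * d)) →
      answerBlock α x = answerBlock α' x := fun α α' x h => by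
    have seg_eq : ∀ y ≤ x + 1, seg α (y * d) ((y + 1) * d) = seg α' (y * d) ((y + 1) * d) :=
      fun y hy => seg_congr (h.mono (Set.Iio_subset_Iio
        (Nat.mul_le_mul_right d (Nat.succ_le_succ hy)))) _
    have hplay : B.play M (C α) x = B.play M (C α') x :=
      B.play_congr fun y hy => congrArg M.profile (seg_eq y hy)
    simp only [answerBlock, seg_eq x x.le_succ, hplay]
  obtain ⟨τ, hτ⟩ := exists_outcome_blocks_eq_of_causal hpos
    (fun α x => hfst _ _ _ (answer_mem α x)) answerBlock_congr
  refine ⟨τ, fun α => hB.wCost_le (hC α) hpos (answer_play_eq_nthSummary fun x => ?_)⟩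
  rw [hτ]
  exact hsummary _ _ _ (answer_mem α x)

end PACost.BlockStrategy

end Strategies

section Bounds

theorem mul_add_one_sq_le {n k : ℕ} (hn : 2 ≤ n) (hk : 2 ≤ k) :
    n * (n * ((k + 1) * ((k + 1) * 2))) ≤ 2 * n ^ 4 * k ^ 2 := by
  have h : k + 1 ≤ n * k := by nlinarith
  calc n * (n * ((k + 1) * ((k + 1) * 2))) = 2 * n ^ 2 * (k + 1) ^ 2 := by ring
    _ ≤ 2 * n ^ 2 * (n * k) ^ 2 := by gcongr
    _ = 2 * n ^ 4 * k ^ 2 := by ring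

theorem cost_exponent_le {n k : ℕ} (hn : 2 ≤ n) (hk : 2 ≤ k) :
    3 * (2 * n ^ 4 * k ^ 2) ≤ 2 * n ^ 7 * k ^ 4 := by
  have h : 2 ^ 3 * 2 ^ 2 ≤ n ^ 3 * k ^ 2 := by gcongr
  calc 3 * (2 * n ^ 4 * k ^ 2) ≤ 2 ^ 3 * 2 ^ 2 * (2 * n ^ 4 * k ^ 2) := by gcongr; norm_num
    _ ≤ n ^ 3 * k ^ 2 * (2 * n ^ 4 * k ^ 2) := by gcongr
    _ = 2 * n ^ 7 * k ^ 4 := by ring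

theorem cost_bound_le {n k b : ℕ} (hn : 2 ≤ n) (hk : 2 ≤ k) (hb : b ≤ 2 * n ^ 4 * k ^ 2) :
    (n * ((k + 1) * (2 ^ b * 2 ^ b)) + 2) * 2 ^ (2 * n ^ 4 * k ^ 2 + 1) ≤
      n ^ 3 * k ^ 2 * 2 ^ (2 * n ^ 7 * k ^ 4 + 3) := by
  have factor : n * (k + 1) + 2 ≤ 4 * (n ^ 3 * k ^ 2) := by
    have hn' : n ≤ n ^ 3 := Nat.le_self_pow three_ne_zero n
    have hk' : k + 1 ≤ k ^ 2 := by nlinarith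
    have hprod : n * (k + 1) ≤ n ^ 3 * k ^ 2 := by gcongr
    nlinarith
  have exponent : b + b + 2 * n ^ 4 * k ^ 2 ≤ 2 * n ^ 7 * k ^ 4 := by
    have := cost_exponent_le hn hk
    omega
  have hone : 1 ≤ 2 ^ b * 2 ^ b := Nat.mul_pos (Nat.two_pow_pos b) (Nat.two_pow_pos b)
  calc (n * ((k + 1) * (2 ^ b * 2 ^ b)) + 2) * 2 ^ (2 * n ^ 4 * k ^ 2 + 1)
      ≤ (n * (k + 1) + 2) * (2 ^ b * 2 ^ b) * 2 ^ (2 * n ^ 4 * k ^ 2 + 1) := by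
        gcongr
        nlinarith
    _ = (n * (k + 1) + 2) * 2 ^ (b + b + 2 * n ^ 4 * k ^ 2 + 1) := by ring
    _ ≤ 4 * (n ^ 3 * k ^ 2) * 2 ^ (2 * n ^ 7 * k ^ 4 + 1) := by
        gcongr
        exact one_le_two
    _ = n ^ 3 * k ^ 2 * 2 ^ (2 * n ^ 7 * k ^ 4 + 3) := by ring

namespace PACost

variable {Q A : Type} [Fintype Q] {n k : ℕ}

theorem two_le_card_and_two_le_card_image {M : PACost Q A} (he : ∃ q, Even (M.Ω q))
    (ho : ∃ q, Odd (M.Ω q)) : 2 ≤ Fintype.card Q ∧ 2 ≤ (Finset.univ.image M.Ω).card := by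
  obtain ⟨q, hq⟩ := he
  obtain ⟨q', hq'⟩ := ho
  have hne : M.Ω q ≠ M.Ω q' := fun h => Nat.not_even_iff_odd.2 hq' (h ▸ hq)
  exact ⟨Fintype.one_lt_card_iff.2 ⟨q, q', fun h => hne (congrArg M.Ω h)⟩,
    Finset.one_lt_card.2 ⟨_, Finset.mem_image_of_mem _ (Finset.mem_univ q), _,
      Finset.mem_image_of_mem _ (Finset.mem_univ q'), hne⟩⟩

variable {M : PACost Q A}

theorem card_univ_product_summaries_le (hn : Fintype.card Q = n)
    (hk : (Finset.univ.image M.Ω).card = k) (hn₂ : 2 ≤ n) (hk₂ : 2 ≤ k) :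
    (Finset.univ ×ˢ M.summaries : Finset (Q × Summary Q)).card ≤ 2 * n ^ 4 * k ^ 2 := by
  have hcolors : M.colors.card ≤ k + 1 := hk ▸ M.card_colors_le
  rw [Finset.card_product, Finset.card_univ, hn]
  refine (Nat.mul_le_mul_left n (M.card_summaries_le.trans ?_)).trans (mul_add_one_sq_le hn₂ hk₂)
  rw [hn]
  gcongr

theorem card_vertices_add_two_mul_le {I O : Type} {M : PACost Q (I × O)}
    (hn : Fintype.card Q = n) (hk : (Finset.univ.image M.Ω).card = k) (hn₂ : 2 ≤ n)
    (hk₂ : 2 ≤ k) : (M.vertices.card + 2) * 2 ^ (2 * n ^ 4 * k ^ 2 + 1) ≤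
      n ^ 3 * k ^ 2 * 2 ^ (2 * n ^ 7 * k ^ 4 + 3) := by
  have hsummaries := card_univ_product_summaries_le (M := M) hn hk hn₂ hk₂
  rw [Finset.card_product, Finset.card_univ, hn] at hsummaries
  refine le_trans ?_ (cost_bound_le hn₂ hk₂ hsummaries)
  have hcolors : M.colors.card ≤ k + 1 := hk ▸ M.card_colors_le
  gcongr
  refine M.card_vertices_le.trans ?_
  rw [hn]
  gcongr

end PACost

end Bounds

theorem statement9_general {Q I O : Type} [Fintype Q] [Inhabited I]
    (M : PACost Q (I × O)) (n k : ℕ)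
    (hn : Fintype.card Q = n) (hk : (Finset.univ.image M.Ω).card = k)
    (he : ∃ q, Even (M.Ω q)) (ho : ∃ q, Odd (M.Ω q))
    (h : ∃ f : ℕ → ℕ, DelayFn f ∧ OWins f M.Lang) :
    ∃ τO : List I → O,
      OWinning (fun i => if i = 0 then 2 ^ (2 * n ^ 4 * k ^ 2 + 2) else 1) M.Lang τO ∧
      stratCost M.wCost (fun i => if i = 0 then 2 ^ (2 * n ^ 4 * k ^ 2 + 2) else 1) τO ≤
        ((n ^ 3 * k ^ 2 * 2 ^ (2 * n ^ 7 * k ^ 4 + 3) : ℕ) : ℕ∞) := by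
  obtain ⟨f, hf, σ, hσ⟩ := h
  have : Nonempty O := ⟨σ []⟩
  obtain ⟨hn₂, hk₂⟩ := PACost.two_le_card_and_two_le_card_image he ho
  rw [hn] at hn₂
  rw [hk] at hk₂
  have hprofiles := (PACost.card_univ_product_summaries_le hn hk hn₂ hk₂).trans (Nat.le_succ _)
  obtain ⟨B, hB⟩ := PACost.BlockStrategy.exists_winning hf hσ
  obtain ⟨τ, hτ⟩ := hB.exists_wCost_le (Nat.pow_le_pow_right two_pos hprofiles)
  rw [← pow_succ'] at hτ
  have bound := fun α => (hτ α).trans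
    (Nat.cast_le.2 (PACost.card_vertices_add_two_mul_le hn hk hn₂ hk₂))
  have hdelay : DelayFn fun i => if i = 0 then 2 ^ (2 * n ^ 4 * k ^ 2 + 2) else 1 := fun i => by
    dsimp only
    split_ifs <;> positivity
  exact ⟨τ, hdelay.oWinning_iff.2 fun α => (bound α).trans_lt (ENat.natCast_lt_top _),
    hdelay.stratCost_le bound⟩

/-- Corollary 3, lookahead and cost bounds. If Player O wins `Γ_f(L(A))`
for some delay function, then she wins for the constant delay function with
`f 0 = 2^(2n⁴k²+2)` with a winning strategy of cost at most `n³k²·2^(2n⁷k⁴+3)`. -/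
theorem statement9 {Q I O : Type} [Fintype Q] [Fintype I] [Fintype O] [Inhabited I]
    (M : PACost Q (I × O)) (n k : ℕ)
    (hn : Fintype.card Q = n) (hk : (Finset.univ.image M.Ω).card = k)
    (he : ∃ q, Even (M.Ω q)) (ho : ∃ q, Odd (M.Ω q))
    (h : ∃ f : ℕ → ℕ, DelayFn f ∧ OWins f M.Lang) :
    ∃ τO : List I → O,
      OWinning (fun i => if i = 0 then 2 ^ (2 * n ^ 4 * k ^ 2 + 2) else 1) M.Lang τO ∧
      stratCost M.wCost (fun i => if i = 0 then 2 ^ (2 * n ^ 4 * k ^ 2 + 2) else 1) τO ≤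
        ((n ^ 3 * k ^ 2 * 2 ^ (2 * n ^ 7 * k ^ 4 + 3) : ℕ) : ℕ∞) :=
  statement9_general M n k hn hk he ho h
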